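/- arXiv:2502.18788 — 3 statements merged into one kernel-verified Lean document; each statement's English description precedes it below -/
import Mathlib

section
/- Let X be a metric arc and s ≥ 1. Then ‖X‖_{s-var} = H_{1/s}(X)^s, where both sides are elements of [0,∞] (with the convention that ∞^s = ∞). -/
open scoped ENNReal

/-- `f` parametrizes the metric space `X` as an arc: `f` is a continuous injection
of the compact interval `[0,1]` onto `X` (equivalently, a homeomorphism from `[0,1]`
onto `X`). -/
def IsArcParam {X : Type*} [MetricSpace X] (f : ℝ → X) : Prop :=
  ContinuousOn f (Set.Icc 0 1) ∧ Set.InjOn f (Set.Icc 0 1) ∧ f '' Set.Icc 0 1 = Set.univ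

/-- `X` is a metric arc: there is a homeomorphism from `[0,1]` onto `X`. -/
def IsMetricArc (X : Type*) [MetricSpace X] : Prop :=
  ∃ f : ℝ → X, IsArcParam f

/-- `A` is a subarc of the metric arc `X`: the image of a closed subinterval of `[0,1]`
under a homeomorphism from `[0,1]` onto `X`. -/
def IsSubarc {X : Type*} [MetricSpace X] (A : Set X) : Prop :=
  ∃ (f : ℝ → X) (a b : ℝ), IsArcParam f ∧ 0 ≤ a ∧ a ≤ b ∧ b ≤ 1 ∧ A = f '' Set.Icc a b

/-- The interior of a subarc `A`, described intrinsically: the points of `A` whose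
removal disconnects `A`.  For `A = f '' [a,b]` (with `a < b`) this is exactly
`f '' (a,b)`, i.e. `A` without its two endpoints. -/
def arcInterior {X : Type*} [MetricSpace X] (A : Set X) : Set X :=
  {x | x ∈ A ∧ ¬ IsPreconnected (A \ {x})}

/-- A partition of the metric arc `X`: a finite collection of subarcs with pairwise
disjoint interiors whose union is `X`. -/
def IsArcPartition {X : Type*} [MetricSpace X] (P : Finset (Set X)) : Prop :=
  (∀ A ∈ P, IsSubarc A) ∧
    ((P : Set (Set X)).Pairwise fun A B => Disjoint (arcInterior A) (arcInterior B)) ∧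
    ⋃₀ (P : Set (Set X)) = Set.univ

/-- The `s`-variation `‖X‖_{s-var}` of `X`: the supremum over all partitions of `X`
of the sums `∑ (diam A)^s`. -/
noncomputable def sVariation (X : Type*) [MetricSpace X] (s : ℝ) : ℝ≥0∞ :=
  ⨆ (P : Finset (Set X)) (_ : IsArcPartition P), ∑ A ∈ P, EMetric.diam A ^ s

/-- `H_{1/s}(X)`: the infimum of all `H` for which there is a surjection
`f : [0,1] → X` with `edist (f x) (f y) ≤ H * (edist x y)^(1/s)`; it equals `∞`
if no such surjection exists. -/
noncomputable def holderConstant (X : Type*) [MetricSpace X] (s : ℝ) : ℝ≥0∞ :=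
  sInf {H : ℝ≥0∞ | ∃ f : ℝ → X, f '' Set.Icc 0 1 = Set.univ ∧
    ∀ x ∈ Set.Icc (0:ℝ) 1, ∀ y ∈ Set.Icc (0:ℝ) 1, edist (f x) (f y) ≤ H * edist x y ^ (1 / s)}

open Set Filter Topology MeasureTheory

section

variable {X : Type*} [MetricSpace X]

/-- An arc parametrization has a continuous inverse. -/
lemma IsArcParam.exists_continuous_inverse {f : ℝ → X} (hf : IsArcParam f) :
    ∃ k : X → ℝ, Continuous k ∧ (∀ x, k x ∈ Icc (0 : ℝ) 1) ∧ (∀ x, f (k x) = x) ∧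
      ∀ t ∈ Icc (0 : ℝ) 1, k (f t) = t := by
  obtain ⟨hc, hi, hs⟩ := hf
  have hbij : Function.Bijective ((Icc (0 : ℝ) 1).domRestrict f) := by
    refine ⟨hi.injective, fun x => ?_⟩
    obtain ⟨t, ht, rfl⟩ : x ∈ f '' Icc 0 1 := hs ▸ mem_univ x
    exact ⟨⟨t, ht⟩, rfl⟩
  let e : Icc (0 : ℝ) 1 ≃ X := Equiv.ofBijective _ hbij
  have he : Continuous e := hc.domRestrict
  refine ⟨fun x => (e.symm x : ℝ),
    continuous_subtype_val.comp he.continuous_symm_of_equiv_compact_to_t2,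
    fun x => (e.symm x).2, fun x => e.apply_symm_apply x, fun t ht => ?_⟩
  exact congrArg Subtype.val (e.symm_apply_apply ⟨t, ht⟩)

lemma IsArcParam.mem_arcInterior {f : ℝ → X} (hf : IsArcParam f) {a b c : ℝ}
    (ha : 0 ≤ a) (hb : b ≤ 1) (hc : c ∈ Ioo a b) : f c ∈ arcInterior (f '' Icc a b) := by
  obtain ⟨k, hk, -, -, hkf⟩ := hf.exists_continuous_inverse
  have hcb := hc.1.trans hc.2
  have hsub : Icc a b ⊆ Icc 0 1 := Icc_subset_Icc ha hb
  have hinj := hf.2.1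
  have hne : ∀ t ∈ Icc a b, t ≠ c → t ∈ k '' (f '' Icc a b \ {f c}) := fun t ht htc =>
    ⟨f t, ⟨mem_image_of_mem f ht, fun h => htc (hinj (hsub ht) (hsub (Ioo_subset_Icc_self hc)) h)⟩,
      hkf t (hsub ht)⟩
  refine ⟨mem_image_of_mem f (Ioo_subset_Icc_self hc), fun hpre => ?_⟩
  have hord := (hpre.image k hk.continuousOn).ordConnected
  obtain ⟨-, ⟨⟨t, ht, rfl⟩, hx⟩, hkx⟩ := hord.out (hne a (left_mem_Icc.2 hcb.le) hc.1.ne)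
    (hne b (right_mem_Icc.2 hcb.le) hc.2.ne') (Ioo_subset_Icc_self hc)
  rw [hkf t (hsub ht)] at hkx
  exact hx (by rw [hkx]; rfl)

lemma IsArcParam.arcInterior_subset {f : ℝ → X} (hf : IsArcParam f) {a b : ℝ}
    (ha : 0 ≤ a) (hb : b ≤ 1) : arcInterior (f '' Icc a b) ⊆ f '' Ioo a b := by
  rintro - ⟨⟨t, ht, rfl⟩, hpre⟩
  have hsub : Icc a b ⊆ Icc 0 1 := Icc_subset_Icc ha hb
  have hdiff : f '' Icc a b \ {f t} = f '' (Icc a b \ {t}) := by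
    rw [(hf.2.1.mono hsub).image_sdiff_subset (singleton_subset_iff.2 ht), image_singleton]
  refine mem_image_of_mem f ⟨ht.1.lt_of_ne ?_, ht.2.lt_of_ne ?_⟩
  · rintro rfl
    refine hpre ?_
    rw [hdiff, Icc_sdiff_left]
    exact isPreconnected_Ioc.image f (hf.1.mono (Ioc_subset_Icc_self.trans hsub))
  · rintro rfl
    refine hpre ?_
    rw [hdiff, Icc_sdiff_right]
    exact isPreconnected_Ico.image f (hf.1.mono (Ico_subset_Icc_self.trans hsub))

lemma IsCompact.exists_ediam_le_edist {A : Set X} (hA : IsCompact A) (hne : A.Nonempty) :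
    ∃ x ∈ A, ∃ y ∈ A, Metric.ediam A ≤ edist x y := by
  obtain ⟨p, hp, hmax⟩ := (hA.prod hA).exists_isMaxOn (hne.prod hne)
    (continuous_edist.continuousOn (s := A ×ˢ A))
  exact ⟨p.1, hp.1, p.2, hp.2, Metric.ediam_le fun x hx y hy => hmax (mk_mem_prod hx hy)⟩

/-- A continuous surjection from `[0,1]` onto an arc crosses each subarc, between two points
realizing its diameter, without leaving the interior of the subarc. -/
lemma IsSubarc.exists_crossing {A : Set X} (hA : IsSubarc A) {g : ℝ → X}
    (hg : ContinuousOn g (Icc 0 1)) (hsurj : g '' Icc 0 1 = univ) :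
    ∃ p ∈ Icc (0 : ℝ) 1, ∃ q ∈ Icc (0 : ℝ) 1, Metric.ediam A ≤ edist (g p) (g q) ∧
      ∀ r ∈ Ioo (min p q) (max p q), g r ∈ arcInterior A := by
  obtain ⟨f, a, b, hf, ha, hab, hb, rfl⟩ := hA
  obtain ⟨k, hk, -, hfk, hkf⟩ := hf.exists_continuous_inverse
  have hsub : Icc a b ⊆ Icc 0 1 := Icc_subset_Icc ha hb
  obtain ⟨-, ⟨u, hu, rfl⟩, -, ⟨v, hv, rfl⟩, hd⟩ := (isCompact_Icc.image_of_continuousOn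
    (hf.1.mono hsub)).exists_ediam_le_edist ((nonempty_Icc.2 hab).image f)
  have hfib : ∀ x, IsCompact (Icc 0 1 ∩ g ⁻¹' {x}) := fun x =>
    isCompact_Icc.of_isClosed_subset
      (hg.preimage_isClosed_of_isClosed isClosed_Icc isClosed_singleton) inter_subset_left
  have hfibne : ∀ x, (Icc 0 1 ∩ g ⁻¹' {x}).Nonempty := fun x => by
    obtain ⟨t, ht, h⟩ : x ∈ g '' Icc 0 1 := hsurj ▸ mem_univ x
    exact ⟨t, ht, h⟩
  obtain ⟨⟨p, q⟩, ⟨⟨hp, hgp⟩, hq, hgq⟩, hmin⟩ := ((hfib (f u)).prod (hfib (f v))).exists_isMinOn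
    ((hfibne _).prod (hfibne _)) (continuous_dist.continuousOn)
  simp only [mem_preimage, mem_singleton_iff] at hp hq hgp hgq
  have hmin' : ∀ p' ∈ Icc (0 : ℝ) 1, ∀ q' ∈ Icc (0 : ℝ) 1, k (g p') = u → k (g q') = v →
      |p - q| ≤ |p' - q'| := fun p' hp' q' hq' h1 h2 =>
    hmin (a := (p', q')) ⟨⟨hp', by simp [← h1, hfk]⟩, hq', by simp [← h2, hfk]⟩
  have hkp : k (g p) = u := by rw [hgp, hkf u (hsub hu)]
  have hkq : k (g q) = v := by rw [hgq, hkf v (hsub hv)]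
  refine ⟨p, hp, q, hq, by rwa [hgp, hgq], fun r hr => ?_⟩
  have hr01 : r ∈ Icc (0 : ℝ) 1 :=
    ⟨(le_min hp.1 hq.1).trans hr.1.le, hr.2.le.trans (max_le hp.2 hq.2)⟩
  have hivt : ∀ q ∈ Icc (0 : ℝ) 1, uIcc (k (g r)) (k (g q)) ⊆ (k ∘ g) '' uIcc r q := fun q hq =>
    intermediate_value_uIcc (f := k ∘ g)
      (hk.comp_continuousOn (hg.mono (ordConnected_Icc.uIcc_subset hr01 hq)))
  have hdist : |r - q| < |p - q| ∧ |p - r| < |p - q| := by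
    rcases le_total p q with h | h
    · simp only [min_eq_left h, max_eq_right h] at hr
      rw [abs_of_nonpos (by linarith : p - q ≤ 0), abs_of_neg (by linarith [hr.2] : r - q < 0),
        abs_of_neg (by linarith [hr.1] : p - r < 0)]
      constructor <;> linarith [hr.1, hr.2]
    · simp only [min_eq_right h, max_eq_left h] at hr
      rw [abs_of_nonneg (by linarith : 0 ≤ p - q), abs_of_pos (by linarith [hr.1] : 0 < r - q),
        abs_of_pos (by linarith [hr.2] : 0 < p - r)]
      constructor <;> linarith [hr.1, hr.2]
  have hnu : u ∉ uIcc (k (g r)) v := fun h => by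
    obtain ⟨w, hw, hwu⟩ := hivt q hq (hkq ▸ h)
    have := hmin' w (ordConnected_Icc.uIcc_subset hr01 hq hw) q hq hwu hkq
    have h2 := abs_sub_le_of_uIcc_subset_uIcc (uIcc_subset_uIcc hw right_mem_uIcc)
    rw [abs_sub_comm q w, abs_sub_comm q r] at h2
    linarith [hdist.1]
  have hnv : v ∉ uIcc (k (g r)) u := fun h => by
    obtain ⟨w, hw, hwv⟩ := hivt p hp (hkp ▸ h)
    have := hmin' p hp w (ordConnected_Icc.uIcc_subset hr01 hp hw) hkp hwv
    have h2 := abs_sub_le_of_uIcc_subset_uIcc (uIcc_subset_uIcc hw right_mem_uIcc)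
    linarith [hdist.2]
  rw [← hfk (g r)]
  refine hf.mem_arcInterior ha hb ?_
  simp only [mem_uIcc, not_or, not_and, not_le] at hnu hnv
  obtain ⟨hau, hub⟩ := hu
  obtain ⟨hav, hvb⟩ := hv
  constructor
  · by_contra! h
    grind
  · by_contra! h
    grind

lemma sum_ediam_rpow_le {s : ℝ} (hs : 1 ≤ s) {P : Finset (Set X)} (hP : IsArcPartition P)
    {H : ℝ≥0∞} {g : ℝ → X} (hsurj : g '' Icc 0 1 = univ)
    (hg : ∀ x ∈ Icc (0 : ℝ) 1, ∀ y ∈ Icc (0 : ℝ) 1,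
      edist (g x) (g y) ≤ H * edist x y ^ (1 / s)) :
    ∑ A ∈ P, Metric.ediam A ^ s ≤ H ^ s := by
  have hs0 : 0 < s := by linarith
  rcases eq_or_ne H ∞ with rfl | hH
  · simp [ENNReal.top_rpow_of_pos hs0]
  have hcont : ContinuousOn g (Icc 0 1) := by
    have : HolderOnWith H.toNNReal ⟨1 / s, by positivity⟩ g (Icc 0 1) := fun x hx y hy => by
      rw [ENNReal.coe_toNNReal hH]
      exact hg x hx y hy
    exact this.continuousOn (NNReal.coe_pos.1 (one_div_pos.2 hs0))
  have hcross : ∀ A : Set X, ∃ p q : ℝ, A ∈ P → p ∈ Icc (0 : ℝ) 1 ∧ q ∈ Icc (0 : ℝ) 1 ∧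
      Metric.ediam A ≤ edist (g p) (g q) ∧
      ∀ r ∈ Ioo (min p q) (max p q), g r ∈ arcInterior A := fun A => by
    by_cases hA : A ∈ P
    · obtain ⟨p, hp, q, hq, h⟩ := (hP.1 A hA).exists_crossing hcont hsurj
      exact ⟨p, q, fun _ => ⟨hp, hq, h⟩⟩
    · exact ⟨0, 0, fun h => absurd h hA⟩
  choose p q hpq using hcross
  let I : Set X → Set ℝ := fun A => Ioo (min (p A) (q A)) (max (p A) (q A))
  have hdisj : (P : Set (Set X)).PairwiseDisjoint I := fun A hA B hB hAB =>
    disjoint_left.2 fun r hrA hrB =>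
      disjoint_left.1 (hP.2.1 hA hB hAB) ((hpq A hA).2.2.2 r hrA) ((hpq B hB).2.2.2 r hrB)
  have hterm : ∀ A ∈ P, Metric.ediam A ^ s ≤ H ^ s * volume (I A) := fun A hA => by
    obtain ⟨hp, hq, hd, -⟩ := hpq A hA
    calc Metric.ediam A ^ s ≤ (H * edist (p A) (q A) ^ (1 / s)) ^ s := by
          gcongr
          exact hd.trans (hg _ hp _ hq)
      _ = H ^ s * volume (I A) := by
          rw [ENNReal.mul_rpow_of_nonneg _ _ hs0.le, ← ENNReal.rpow_mul, one_div,
            inv_mul_cancel₀ hs0.ne', ENNReal.rpow_one, Real.volume_Ioo, max_sub_min_eq_abs,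
            edist_dist, Real.dist_eq, abs_sub_comm]
  calc ∑ A ∈ P, Metric.ediam A ^ s ≤ ∑ A ∈ P, H ^ s * volume (I A) := Finset.sum_le_sum hterm
    _ = H ^ s * volume (⋃ A ∈ P, I A) := by
        rw [measure_biUnion_finset hdisj fun _ _ => measurableSet_Ioo, Finset.mul_sum]
    _ ≤ H ^ s * volume (Icc (0 : ℝ) 1) := by
        gcongr
        exact iUnion₂_subset fun A hA => Ioo_subset_Icc_self.trans
          (Icc_subset_Icc (le_min (hpq A hA).1.1 (hpq A hA).2.1.1)
            (max_le (hpq A hA).1.2 (hpq A hA).2.1.2))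
    _ = H ^ s := by simp

lemma sVariation_le_holderConstant_rpow {s : ℝ} (hs : 1 ≤ s) :
    sVariation X s ≤ holderConstant X s ^ s := by
  have hs0 : 0 < s := by linarith
  rw [← ENNReal.rpow_inv_le_iff hs0]
  refine le_sInf ?_
  rintro H ⟨g, hsurj, hg⟩
  rw [ENNReal.rpow_inv_le_iff hs0]
  exact iSup₂_le fun P hP => sum_ediam_rpow_le hs hP hsurj hg

/-- The supremum of `∑ (diam A)^s` over the partitions of `S` into subarcs of `X`. -/
noncomputable def sVariationOn (s : ℝ) (S : Set X) : ℝ≥0∞ :=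
  ⨆ (P : Finset (Set X)) (_ : (∀ A ∈ P, IsSubarc A) ∧
    ((P : Set (Set X)).Pairwise fun A B => Disjoint (arcInterior A) (arcInterior B)) ∧
    ⋃₀ (P : Set (Set X)) = S), ∑ A ∈ P, Metric.ediam A ^ s

lemma IsArcParam.sVariationOn_add_le {s : ℝ} (hs : 1 ≤ s) {f : ℝ → X} (hf : IsArcParam f)
    {a b : ℝ} (ha : 0 ≤ a) (hab : a < b) (hb : b ≤ 1) :
    sVariationOn s (f '' Icc 0 a) + edist (f a) (f b) ^ s ≤ sVariationOn s (f '' Icc 0 b) := by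
  classical
  have hfin : edist (f a) (f b) ^ s ≠ ∞ :=
    ENNReal.rpow_ne_top_of_nonneg (by linarith) (edist_ne_top _ _)
  have hinj : ∀ x ∈ Icc 0 a, ∀ y ∈ Ioc a b, f x ≠ f y := fun x hx y hy h => by
    have := hf.2.1 ⟨hx.1, by linarith [hx.2]⟩ ⟨by linarith [hy.1], hy.2.trans hb⟩ h
    linarith [hx.2, hy.1]
  have key : ∀ P : Finset (Set X), ((∀ A ∈ P, IsSubarc A) ∧
      ((P : Set (Set X)).Pairwise fun A B => Disjoint (arcInterior A) (arcInterior B)) ∧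
      ⋃₀ (P : Set (Set X)) = f '' Icc 0 a) →
      ∑ A ∈ P, Metric.ediam A ^ s + edist (f a) (f b) ^ s ≤ sVariationOn s (f '' Icc 0 b) := by
    rintro P ⟨hsub, hdis, hun⟩
    have hPa : ∀ A ∈ P, A ⊆ f '' Icc 0 a := fun A hA => hun ▸ subset_sUnion_of_mem hA
    have hnot : f '' Icc a b ∉ P := fun h => by
      obtain ⟨x, hx, hxb⟩ := hPa _ h (mem_image_of_mem f (right_mem_Icc.2 hab.le))
      exact hinj x hx b ⟨hab, le_rfl⟩ hxb
    have hdisj : ∀ A ∈ P, Disjoint (arcInterior (f '' Icc a b)) (arcInterior A) := fun A hA => by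
      refine disjoint_left.2 fun z hz hzA => ?_
      obtain ⟨y, hy, rfl⟩ := hf.arcInterior_subset ha hb hz
      obtain ⟨x, hx, hxy⟩ := hPa A hA hzA.1
      exact hinj x hx y (Ioo_subset_Ioc_self hy) hxy
    calc ∑ A ∈ P, Metric.ediam A ^ s + edist (f a) (f b) ^ s
        ≤ Metric.ediam (f '' Icc a b) ^ s + ∑ A ∈ P, Metric.ediam A ^ s := by
          rw [add_comm]
          gcongr
          exact Metric.edist_le_ediam_of_mem (mem_image_of_mem f (left_mem_Icc.2 hab.le))
            (mem_image_of_mem f (right_mem_Icc.2 hab.le))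
      _ = ∑ A ∈ insert (f '' Icc a b) P, Metric.ediam A ^ s := by
          rw [Finset.sum_insert hnot]
      _ ≤ sVariationOn s (f '' Icc 0 b) := by
          refine le_iSup₂_of_le (insert (f '' Icc a b) P) ⟨?_, ?_, ?_⟩ le_rfl
          · exact Finset.forall_mem_insert _ _ _ |>.2 ⟨⟨f, a, b, hf, ha, hab.le, hb, rfl⟩, hsub⟩
          · rw [Finset.coe_insert]
            exact hdis.insert fun A hA _ => ⟨hdisj A hA, (hdisj A hA).symm⟩
          · rw [Finset.coe_insert, sUnion_insert, hun, ← image_union, union_comm,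
              Icc_union_Icc_eq_Icc ha hab.le]
  have hsingle := key {f '' Icc 0 a} ⟨by
    simpa using ⟨f, 0, a, hf, le_rfl, ha, by linarith, rfl⟩, by simp, by simp⟩
  exact add_le_of_le_tsub_right_of_le (le_add_self.trans hsingle)
    (iSup₂_le fun P hP => ENNReal.le_sub_of_add_le_right hfin (key P hP))

/-- A parametrization whose `s`-th power increments are controlled by an increasing function can be
reparametrized to be `1/s`-Hölder, even if the control function is discontinuous. -/
lemma exists_holder_reparam {s : ℝ} (hs : 1 ≤ s) {f : ℝ → X} (hf : IsArcParam f) {w : ℝ → ℝ}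
    {V : ℝ} (hw0 : ∀ t ∈ Icc (0 : ℝ) 1, 0 ≤ w t) (hwV : ∀ t ∈ Icc (0 : ℝ) 1, w t ≤ V)
    (hw : ∀ a b, 0 ≤ a → a < b → b ≤ 1 → w a + dist (f a) (f b) ^ s ≤ w b) :
    ∃ g : ℝ → X, g '' Icc 0 1 = univ ∧ ∀ x y, dist (g x) (g y) ^ s ≤ V * dist x y := by
  have hs0 : 0 < s := by linarith
  have hmono : ∀ a b, 0 ≤ a → a < b → b ≤ 1 → w a < w b := fun a b ha hab hb => by
    have hne : f a ≠ f b := fun h =>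
      hab.ne (hf.2.1 ⟨ha, hab.le.trans hb⟩ ⟨ha.trans hab.le, hb⟩ h)
    have := Real.rpow_pos_of_pos (dist_pos.2 hne) s
    linarith [hw a b ha hab hb]
  have hV : 0 < V := by
    linarith [hw0 0 (by simp), hmono 0 1 le_rfl one_pos le_rfl, hwV 1 (by simp)]
  let T : ℝ → Set ℝ := fun y => {t | t ∈ Icc (0 : ℝ) 1 ∧ w t ≤ y}
  have hTb : ∀ y, BddAbove (T y) := fun y => ⟨1, fun t ht => ht.1.2⟩
  have hT0 : ∀ y, 0 ≤ sSup (T y) := fun y => Real.sSup_nonneg fun t ht => ht.1.1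
  have hT1 : ∀ y, sSup (T y) ≤ 1 := fun y => Real.sSup_le (fun t ht => ht.1.2) zero_le_one
  have hTm : ∀ x y, x ≤ y → sSup (T x) ≤ sSup (T y) := fun x y hxy =>
    Real.sSup_le (fun t ht => le_csSup (hTb y) ⟨ht.1, ht.2.trans hxy⟩) (hT0 y)
  have hlt : ∀ x y, x ≤ y → dist (f (sSup (T x))) (f (sSup (T y))) ^ s ≤ y - x := by
    intro x y hxy
    rcases (hTm x y hxy).eq_or_lt with h | hab
    · rw [h, dist_self, Real.zero_rpow hs0.ne']
      linarith
    have ha := hT0 x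
    have hb := hT1 y
    have hstep : ∀ a' b', sSup (T x) < a' → a' < b' → b' < sSup (T y) →
        dist (f a') (f b') ^ s ≤ y - x := by
      intro a' b' haa hab' hbb
      obtain ⟨t, ht, hbt⟩ := exists_lt_of_lt_csSup
        (nonempty_iff_ne_empty.2 fun h => by
          rw [h, Real.sSup_empty] at hab hbb; linarith) hbb
      have h1 : x < w a' := by
        by_contra! h
        exact haa.not_ge (le_csSup (hTb x) ⟨⟨by linarith, by linarith⟩, h⟩)
      have h2 := hmono b' t (by linarith) hbt ht.1.2
      linarith [hw a' b' (by linarith) hab' (by linarith), ht.2]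
    generalize sSup (T x) = a at *
    generalize sSup (T y) = b at *
    have hev : ∀ᶠ ε in 𝓝[>] (0 : ℝ), 0 < ε ∧ ε < (b - a) / 2 :=
      Ioo_mem_nhdsGT (by linarith : 0 < (b - a) / 2)
    have hta : Tendsto (fun ε => f (a + ε)) (𝓝[>] 0) (𝓝 (f a)) := by
      refine (hf.1 a ⟨ha, by linarith⟩).tendsto.comp (tendsto_nhdsWithin_iff.2 ⟨?_, ?_⟩)
      · exact ((continuous_const.add continuous_id).tendsto' 0 a (by simp)).mono_left
          nhdsWithin_le_nhds
      · filter_upwards [hev] with ε hε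
        constructor <;> linarith [hε.1, hε.2]
    have htb : Tendsto (fun ε => f (b - ε)) (𝓝[>] 0) (𝓝 (f b)) := by
      refine (hf.1 b ⟨by linarith, hb⟩).tendsto.comp (tendsto_nhdsWithin_iff.2 ⟨?_, ?_⟩)
      · exact ((continuous_const.sub continuous_id).tendsto' 0 b (by simp)).mono_left
          nhdsWithin_le_nhds
      · filter_upwards [hev] with ε hε
        constructor <;> linarith [hε.1, hε.2]
    refine le_of_tendsto ((hta.dist htb).rpow_const (Or.inr hs0.le)) ?_
    filter_upwards [hev] with ε hε
    exact hstep _ _ (by linarith [hε.1]) (by linarith [hε.2]) (by linarith [hε.1])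
  refine ⟨fun x => f (sSup (T (V * x))), eq_univ_of_forall fun z => ?_, fun x y => ?_⟩
  · obtain ⟨t, ht, rfl⟩ : z ∈ f '' Icc 0 1 := hf.2.2 ▸ mem_univ z
    refine ⟨w t / V, ⟨div_nonneg (hw0 t ht) hV.le, (div_le_one hV).2 (hwV t ht)⟩, ?_⟩
    have hmax : IsGreatest (T (w t)) t := ⟨⟨ht, le_rfl⟩, fun u hu => by
      by_contra! h
      exact (hmono t u ht.1 h hu.1.2).not_ge hu.2⟩
    simp only [mul_div_cancel₀ _ hV.ne', hmax.csSup_eq]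
  · rw [Real.dist_eq, ← abs_of_pos hV, ← abs_mul, mul_sub, abs_of_pos hV]
    rcases le_total x y with h | h
    · rw [abs_sub_comm]
      exact (hlt _ _ (by gcongr)).trans (le_abs_self _)
    · rw [dist_comm]
      exact (hlt _ _ (by gcongr)).trans (le_abs_self _)

lemma holderConstant_rpow_le_sVariation (hX : IsMetricArc X) {s : ℝ} (hs : 1 ≤ s) :
    holderConstant X s ^ s ≤ sVariation X s := by
  have hs0 : 0 < s := by linarith
  obtain ⟨f, hf⟩ := hX
  rcases eq_or_ne (sVariation X s) ∞ with hV | hV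
  · simp [hV]
  have hone : sVariationOn s (f '' Icc 0 1) = sVariation X s := by
    rw [hf.2.2]; rfl
  have hle : ∀ t ∈ Icc (0 : ℝ) 1, sVariationOn s (f '' Icc 0 t) ≤ sVariation X s := by
    intro t ht
    rcases ht.2.eq_or_lt with rfl | h
    · exact hone.le
    · exact le_self_add.trans ((hf.sVariationOn_add_le hs ht.1 h le_rfl).trans_eq hone)
  have hfin : ∀ t ∈ Icc (0 : ℝ) 1, sVariationOn s (f '' Icc 0 t) ≠ ∞ := fun t ht =>
    ne_top_of_le_ne_top hV (hle t ht)
  obtain ⟨g, hsurj, hg⟩ := exists_holder_reparam hs hf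
    (w := fun t => (sVariationOn s (f '' Icc 0 t)).toReal) (V := (sVariation X s).toReal)
    (fun t _ => ENNReal.toReal_nonneg) (fun t ht => ENNReal.toReal_mono hV (hle t ht))
    (fun a b ha hab hb => by
      have h := ENNReal.toReal_mono (hfin b ⟨by linarith, hb⟩)
        (hf.sVariationOn_add_le hs ha hab hb)
      rwa [ENNReal.toReal_add (hfin a ⟨ha, by linarith⟩)
        (ENNReal.rpow_ne_top_of_nonneg hs0.le (edist_ne_top _ _)), ← ENNReal.toReal_rpow,
        ← dist_edist] at h)
  rw [← ENNReal.le_rpow_inv_iff hs0]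
  refine sInf_le ⟨g, hsurj, fun x _ y _ => ?_⟩
  rw [one_div, ← ENNReal.mul_rpow_of_nonneg _ _ (inv_nonneg.2 hs0.le),
    ENNReal.le_rpow_inv_iff hs0, edist_dist, edist_dist, ← ENNReal.ofReal_toReal hV,
    ENNReal.ofReal_rpow_of_nonneg dist_nonneg hs0.le, ← ENNReal.ofReal_mul ENNReal.toReal_nonneg]
  exact ENNReal.ofReal_le_ofReal (hg x y)

end

/-- For a metric arc `X` and `s ≥ 1`, `‖X‖_{s-var} = H_{1/s}(X) ^ s`. -/
theorem sVariation_eq_holderConstant_rpow (X : Type*) [MetricSpace X]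
    (hX : IsMetricArc X) (s : ℝ) (hs : 1 ≤ s) :
    sVariation X s = holderConstant X s ^ s :=
  le_antisymm (sVariation_le_holderConstant_rpow hs) (holderConstant_rpow_le_sVariation hX hs)
end

section
/- Let X be a metric arc and s ≥ 1. Then X is a (1/s)-Hölder arc, i.e., there exist a homeomorphism f from [0,1] onto X and H > 0 with d(f(x), f(y)) ≤ H|x − y|^{1/s} for all x, y ∈ [0,1], if and only if ‖X‖_{s-var} < ∞. -/
open scoped ENNReal

/-- `ChainSum D a b S` says that `S = ∑ D tᵢ tᵢ₊₁` for some `a = t₀ < t₁ < ⋯ < tₙ = b`. -/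
inductive ChainSum (D : ℝ → ℝ → ℝ) (a : ℝ) : ℝ → ℝ → Prop
  | refl : ChainSum D a a 0
  | step {b c S : ℝ} : ChainSum D a b S → b < c → ChainSum D a c (S + D b c)

namespace ChainSum

variable {D : ℝ → ℝ → ℝ} {a b c S T : ℝ}

theorem le (h : ChainSum D a b S) : a ≤ b := by
  induction h with
  | refl => exact le_rfl
  | step _ hbc ih => exact ih.trans hbc.le

theorem nonneg (hD : ∀ x y, 0 ≤ D x y) (h : ChainSum D a b S) : 0 ≤ S := by
  induction h with
  | refl => exact le_rfl
  | step _ _ ih => exact add_nonneg ih (hD _ _)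

theorem eq_zero (h : ChainSum D a a S) : S = 0 := by
  cases h with
  | refl => rfl
  | step h hba => exact absurd hba h.le.not_gt

theorem trans (h : ChainSum D a b S) (h' : ChainSum D b c T) : ChainSum D a c (S + T) := by
  induction h' with
  | refl => simpa using h
  | step _ hlt ih => rw [← add_assoc]; exact ih.step hlt

theorem exists_of_le (D : ℝ → ℝ → ℝ) (hab : a ≤ b) : ∃ S, ChainSum D a b S := by
  rcases hab.eq_or_lt with rfl | h
  · exact ⟨_, refl⟩
  · exact ⟨_, refl.step h⟩

end ChainSum

/-- The supremum of the chain sums of `D` from `a` to `b`. -/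
noncomputable def chainVar (D : ℝ → ℝ → ℝ) (a b : ℝ) : ℝ :=
  sSup {S | ChainSum D a b S}

section ChainVar

variable {D : ℝ → ℝ → ℝ} {M : ℝ}

theorem ChainSum.le_of_bound (hD : ∀ x y, 0 ≤ D x y) (hM : ∀ S, ChainSum D 0 1 S → S ≤ M)
    {a b S : ℝ} (ha : 0 ≤ a) (hb : b ≤ 1) (h : ChainSum D a b S) : S ≤ M := by
  obtain ⟨S₀, h₀⟩ := ChainSum.exists_of_le D ha
  obtain ⟨S₁, h₁⟩ := ChainSum.exists_of_le D hb
  have := hM _ ((h₀.trans h).trans h₁)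
  linarith [h₀.nonneg hD, h₁.nonneg hD]

theorem ChainSum.le_chainVar (hD : ∀ x y, 0 ≤ D x y) (hM : ∀ S, ChainSum D 0 1 S → S ≤ M)
    {a b S : ℝ} (ha : 0 ≤ a) (hb : b ≤ 1) (h : ChainSum D a b S) : S ≤ chainVar D a b :=
  le_csSup ⟨M, fun _ hT => ChainSum.le_of_bound hD hM ha hb hT⟩ h

theorem chainVar_le {a b C : ℝ} (hab : a ≤ b) (h : ∀ S, ChainSum D a b S → S ≤ C) :
    chainVar D a b ≤ C :=
  csSup_le (ChainSum.exists_of_le D hab) h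

theorem chainVar_nonneg (hD : ∀ x y, 0 ≤ D x y) (a b : ℝ) : 0 ≤ chainVar D a b :=
  Real.sSup_nonneg fun _ h => ChainSum.nonneg hD h

theorem chainVar_add_le (hD : ∀ x y, 0 ≤ D x y) (hM : ∀ S, ChainSum D 0 1 S → S ≤ M)
    {a b c : ℝ} (ha : 0 ≤ a) (hab : a ≤ b) (hbc : b ≤ c) (hc : c ≤ 1) :
    chainVar D a b + chainVar D b c ≤ chainVar D a c := by
  rw [← le_sub_iff_add_le]
  refine chainVar_le hab fun S hS => ?_
  rw [le_sub_comm]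
  refine chainVar_le hbc fun T hT => ?_
  have := (hS.trans hT).le_chainVar hD hM ha hc
  linarith

theorem apply_le_chainVar (hD : ∀ x y, 0 ≤ D x y) (hD₀ : ∀ x, D x x = 0)
    (hM : ∀ S, ChainSum D 0 1 S → S ≤ M)
    {a b : ℝ} (ha : 0 ≤ a) (hab : a ≤ b) (hb : b ≤ 1) : D a b ≤ chainVar D a b := by
  rcases hab.eq_or_lt with rfl | h
  · rw [hD₀]; exact chainVar_nonneg hD _ _
  · simpa using (ChainSum.refl.step h).le_chainVar hD hM ha hb

theorem ChainSum.exists_sub_le_chainVar_right (hD : ∀ x y, 0 ≤ D x y)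
    (hDc : Continuous fun p : ℝ × ℝ => D p.1 p.2) (hM : ∀ S, ChainSum D 0 1 S → S ≤ M)
    {a t S ε : ℝ} (ha : 0 ≤ a) (ht : t ≤ 1) (hε : 0 < ε) (h : ChainSum D a t S) :
    ∃ δ > 0, ∀ x, a ≤ x → x ≤ t → t - δ < x → S - ε ≤ chainVar D a x := by
  cases h with
  | refl => exact ⟨1, one_pos, fun x _ _ _ => by linarith [chainVar_nonneg hD a x]⟩
  | @step b _ T h hbt =>
    have hc : ContinuousAt (fun x => D b x) t :=
      (hDc.comp (Continuous.prodMk_right b)).continuousAt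
    obtain ⟨δ, hδ, H⟩ := Metric.continuousAt_iff.1 hc ε hε
    refine ⟨min δ (t - b), lt_min hδ (sub_pos.2 hbt), fun x _ hxt hx => ?_⟩
    have h₁ : b < x := by linarith [min_le_right δ (t - b)]
    have h₂ : dist x t < δ := by
      rw [Real.dist_eq, abs_lt]; constructor <;> linarith [min_le_left δ (t - b)]
    have h₃ := (abs_lt.1 (H h₂)).1
    have := (h.step h₁).le_chainVar hD hM ha (hxt.trans ht)
    linarith

theorem ChainSum.exists_sub_le_chainVar_left (hD : ∀ x y, 0 ≤ D x y) (hD₀ : ∀ x, D x x = 0)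
    (hDc : Continuous fun p : ℝ × ℝ => D p.1 p.2) (hM : ∀ S, ChainSum D 0 1 S → S ≤ M)
    {t b S ε : ℝ} (ht : 0 ≤ t) (hb : b ≤ 1) (htb : t < b) (hε : 0 < ε) (h : ChainSum D t b S) :
    ∃ δ > 0, ∀ x, t ≤ x → x ≤ b → x < t + δ → S - ε ≤ chainVar D x b := by
  induction h with
  | refl => exact absurd htb (lt_irrefl _)
  | @step b c S h hbc ih =>
    rcases h.le.eq_or_lt with rfl | htb'
    · have hc : ContinuousAt (fun x => D x c) t :=
        (hDc.comp (Continuous.prodMk_left c)).continuousAt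
      obtain ⟨δ, hδ, H⟩ := Metric.continuousAt_iff.1 hc ε hε
      refine ⟨δ, hδ, fun x hx hxc hxδ => ?_⟩
      have h₂ : dist x t < δ := by
        rw [Real.dist_eq, abs_lt]; constructor <;> linarith
      have h₃ := (abs_lt.1 (H h₂)).1
      have h₄ := apply_le_chainVar hD hD₀ hM (ht.trans hx) hxc hb
      rw [h.eq_zero]
      linarith
    · obtain ⟨δ, hδ, H⟩ := ih (hbc.le.trans hb) htb'
      refine ⟨min δ (b - t), lt_min hδ (sub_pos.2 htb'), fun x hx hxc hxδ => ?_⟩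
      have h₁ : x ≤ b := by linarith [min_le_right δ (b - t)]
      have h₂ := H x hx h₁ (by linarith [min_le_left δ (b - t)])
      have h₃ := chainVar_add_le hD hM (ht.trans hx) h₁ hbc.le hb
      have h₄ := apply_le_chainVar hD hD₀ hM (by linarith) hbc.le hb
      linarith

theorem exists_chainVar_lt (hD : ∀ x y, 0 ≤ D x y) (hD₀ : ∀ x, D x x = 0)
    (hDc : Continuous fun p : ℝ × ℝ => D p.1 p.2) (hM : ∀ S, ChainSum D 0 1 S → S ≤ M)
    {t ε : ℝ} (ht : 0 ≤ t) (ht' : t < 1) (hε : 0 < ε) :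
    ∃ δ > 0, ∀ x, t ≤ x → x ≤ 1 → x < t + δ → chainVar D t x < ε := by
  obtain ⟨S, hS, hlt⟩ := exists_lt_of_lt_csSup (ChainSum.exists_of_le D ht'.le)
    (show chainVar D t 1 - ε / 2 < chainVar D t 1 by linarith)
  obtain ⟨δ, hδ, H⟩ := ChainSum.exists_sub_le_chainVar_left hD hD₀ hDc hM ht le_rfl ht'
    (half_pos hε) hS
  refine ⟨δ, hδ, fun x hx hx1 hxδ => ?_⟩
  linarith [H x hx hx1 hxδ, chainVar_add_le hD hM ht hx hx1 le_rfl]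

theorem ChainSum.le_add_chainVar (hD : ∀ x y, 0 ≤ D x y) (hD₀ : ∀ x, D x x = 0)
    (hM : ∀ S, ChainSum D 0 1 S → S ≤ M) {t x η S : ℝ} (hη : 0 ≤ η)
    (ht : 0 ≤ t) (htx : t ≤ x) (hx : x ≤ 1)
    (H : ∀ u v, 0 ≤ u → u ≤ t → t ≤ v → v ≤ x → D u v ≤ D u t + η) (h : ChainSum D 0 x S) :
    S ≤ chainVar D 0 t + η + chainVar D t x := by
  induction h with
  | refl => linarith [chainVar_nonneg hD 0 t, chainVar_nonneg hD t 0]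
  | @step b c S h hbc ih =>
    rcases le_or_gt t b with htb | hbt
    · have h₁ := ih htb (hbc.le.trans hx) fun u v hu hut htv hv => H u v hu hut htv (hv.trans hbc.le)
      have h₂ := chainVar_add_le hD hM ht htb hbc.le hx
      have h₃ := apply_le_chainVar hD hD₀ hM h.le hbc.le hx
      linarith
    · have h₁ := (h.step hbt).le_chainVar hD hM le_rfl (htx.trans hx)
      have h₂ := H b c h.le hbt.le htx le_rfl
      linarith [chainVar_nonneg hD t c]

theorem chainVar_mono (hD : ∀ x y, 0 ≤ D x y) (hM : ∀ S, ChainSum D 0 1 S → S ≤ M)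
    {a b c : ℝ} (ha : 0 ≤ a) (hab : a ≤ b) (hbc : b ≤ c) (hc : c ≤ 1) :
    chainVar D a b ≤ chainVar D a c := by
  linarith [chainVar_add_le hD hM ha hab hbc hc, chainVar_nonneg hD b c]

theorem continuousOn_chainVar (hD : ∀ x y, 0 ≤ D x y) (hD₀ : ∀ x, D x x = 0)
    (hDc : Continuous fun p : ℝ × ℝ => D p.1 p.2) (hM : ∀ S, ChainSum D 0 1 S → S ≤ M) :
    ContinuousOn (chainVar D 0) (Set.Icc 0 1) := by
  rw [Metric.continuousOn_iff]
  rintro t ⟨ht0, ht1⟩ ε hε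
  obtain ⟨δ₁, hδ₁, H₁⟩ : ∃ δ > 0, ∀ x, 0 ≤ x → x ≤ t → t - δ < x →
      chainVar D 0 t - ε < chainVar D 0 x := by
    obtain ⟨S, hS, hlt⟩ := exists_lt_of_lt_csSup (ChainSum.exists_of_le D ht0)
      (show chainVar D 0 t - ε / 2 < chainVar D 0 t by linarith)
    obtain ⟨δ, hδ, H⟩ := ChainSum.exists_sub_le_chainVar_right hD hDc hM le_rfl ht1
      (half_pos hε) hS
    exact ⟨δ, hδ, fun x h0 h1 h2 => by linarith [H x h0 h1 h2]⟩
  obtain ⟨δ₂, hδ₂, H₂⟩ : ∃ δ > 0, ∀ x, t ≤ x → x ≤ 1 → x < t + δ →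
      chainVar D 0 x < chainVar D 0 t + ε := by
    rcases ht1.eq_or_lt with rfl | ht1
    · refine ⟨1, one_pos, fun x hx hx1 _ => ?_⟩
      rw [le_antisymm hx1 hx]
      linarith
    have huc : UniformContinuousOn (fun p : ℝ × ℝ => D p.1 p.2) (Set.Icc 0 1 ×ˢ Set.Icc 0 1) :=
      (isCompact_Icc.prod isCompact_Icc).uniformContinuousOn_of_continuous hDc.continuousOn
    obtain ⟨δ, hδ, H⟩ := Metric.uniformContinuousOn_iff.1 huc (ε / 3) (by positivity)
    obtain ⟨δ', hδ', H'⟩ := exists_chainVar_lt hD hD₀ hDc hM ht0 ht1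
      (show 0 < ε / 3 by positivity)
    refine ⟨min δ δ', lt_min hδ hδ', fun x hx hx1 hxδ => ?_⟩
    have h₁ := H' x hx hx1 (by linarith [min_le_right δ δ'])
    have h₂ : chainVar D 0 x ≤ chainVar D 0 t + ε / 3 + chainVar D t x := by
      refine chainVar_le (ht0.trans hx) fun S hS =>
        hS.le_add_chainVar hD hD₀ hM (by positivity) ht0 hx hx1 fun u v hu hut htv hv => ?_
      have h₃ := H (u, v) ⟨⟨hu, by linarith⟩, ⟨by linarith, by linarith⟩⟩ (u, t)
        ⟨⟨hu, by linarith⟩, ⟨ht0, ht1.le⟩⟩ (by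
          rw [Prod.dist_eq, dist_self, Real.dist_eq]
          refine max_lt hδ (abs_lt.2 ⟨?_, ?_⟩) <;> simp only <;> linarith [min_le_left δ δ'])
      have h₄ := (abs_lt.1 h₃).2
      simp only at h₄
      linarith
    linarith
  refine ⟨min δ₁ δ₂, lt_min hδ₁ hδ₂, fun x hx hxt => ?_⟩
  rw [Real.dist_eq, abs_lt] at hxt
  have m₁ := min_le_left δ₁ δ₂
  have m₂ := min_le_right δ₁ δ₂
  rw [Real.dist_eq, abs_lt]
  rcases le_total x t with h | h
  · have h₁ := H₁ x hx.1 h (by linarith)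
    have h₂ := chainVar_mono hD hM le_rfl hx.1 h ht1
    constructor <;> linarith
  · have h₁ := H₂ x h hx.2 (by linarith)
    have h₂ := chainVar_mono hD hM le_rfl ht0 h hx.2
    constructor <;> linarith

end ChainVar

section Arc

variable {X : Type*} [MetricSpace X] {f : ℝ → X}

theorem IsArcParam.arcInterior_image_Icc (hf : IsArcParam f) {a b : ℝ} (ha : 0 ≤ a)
    (hab : a ≤ b) (hb : b ≤ 1) : arcInterior (f '' Set.Icc a b) = f '' Set.Ioo a b := by
  obtain ⟨hc, hi, -⟩ := hf
  have hsub : Set.Icc a b ⊆ Set.Icc 0 1 := Set.Icc_subset_Icc ha hb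
  have hdiff : ∀ x ∈ Set.Icc a b, f '' Set.Icc a b \ {f x} = f '' (Set.Icc a b \ {x}) := by
    intro x hx
    rw [(hi.mono hsub).image_sdiff_subset (Set.singleton_subset_iff.2 hx), Set.image_singleton]
  ext y
  constructor
  · rintro ⟨⟨x, hx, rfl⟩, hn⟩
    rw [hdiff x hx] at hn
    refine ⟨x, ⟨lt_of_le_of_ne hx.1 ?_, lt_of_le_of_ne hx.2 ?_⟩, rfl⟩
    · rintro rfl
      rw [Set.Icc_sdiff_left] at hn
      exact hn (isPreconnected_Ioc.image _ (hc.mono (Set.Ioc_subset_Icc_self.trans hsub)))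
    · rintro rfl
      rw [Set.Icc_sdiff_right] at hn
      exact hn (isPreconnected_Ico.image _ (hc.mono (Set.Ico_subset_Icc_self.trans hsub)))
  · rintro ⟨x, hx, rfl⟩
    refine ⟨⟨x, Set.Ioo_subset_Icc_self hx, rfl⟩, fun hp => ?_⟩
    have hcl : ∀ c d, 0 ≤ c → d ≤ 1 → IsClosed (f '' Set.Icc c d) := fun c d h0 h1 =>
      (isCompact_Icc.image_of_continuousOn (hc.mono (Set.Icc_subset_Icc h0 h1))).isClosed
    have ha1 : a ∈ Set.Icc (0 : ℝ) 1 := hsub ⟨le_rfl, hab⟩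
    have hb1 : b ∈ Set.Icc (0 : ℝ) 1 := hsub ⟨hab, le_rfl⟩
    have hx1 : x ∈ Set.Icc (0 : ℝ) 1 := hsub (Set.Ioo_subset_Icc_self hx)
    obtain ⟨y, ⟨-, hyx⟩, ⟨u, hu, rfl⟩, ⟨v, hv, huv⟩⟩ := isPreconnected_closed_iff.1 hp
      (f '' Set.Icc a x) (f '' Set.Icc x b)
      (hcl _ _ ha hx1.2) (hcl _ _ hx1.1 hb)
      (by rw [← Set.image_union, Set.Icc_union_Icc_eq_Icc hx.1.le hx.2.le]
          exact Set.sdiff_subset)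
      ⟨f a, ⟨⟨a, ⟨le_rfl, hab⟩, rfl⟩, fun h => hx.1.ne (hi ha1 hx1 h)⟩,
        ⟨a, ⟨le_rfl, hx.1.le⟩, rfl⟩⟩
      ⟨f b, ⟨⟨b, ⟨hab, le_rfl⟩, rfl⟩, fun h => hx.2.ne' (hi hb1 hx1 h)⟩,
        ⟨b, ⟨hx.2.le, le_rfl⟩, rfl⟩⟩
    have := hi ⟨hx1.1.trans hv.1, hv.2.trans hb⟩ ⟨ha.trans hu.1, hu.2.trans hx1.2⟩ huv
    subst this
    exact hyx (by rw [le_antisymm hu.2 hv.1]; rfl)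

theorem IsArcParam.exists_eq_image_Icc (hf : IsArcParam f) {A : Set X} (hA : IsSubarc A) :
    ∃ c d, 0 ≤ c ∧ c ≤ d ∧ d ≤ 1 ∧ A = f '' Set.Icc c d := by
  obtain ⟨g, a, b, ⟨hgc, -, -⟩, ha, hab, hb, rfl⟩ := hA
  obtain ⟨hc, hi, hs⟩ := hf
  have hg := hgc.mono (Set.Icc_subset_Icc ha hb)
  have hAc : IsCompact (g '' Set.Icc a b) := isCompact_Icc.image_of_continuousOn hg
  have hAp : IsConnected (g '' Set.Icc a b) := (isConnected_Icc hab).image _ hg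
  have hbij : Function.Bijective ((Set.Icc (0 : ℝ) 1).domRestrict f) :=
    ⟨Set.injOn_iff_injective.1 hi, by
      rw [← Set.range_eq_univ, Set.range_domRestrict, hs]⟩
  let e : Set.Icc (0 : ℝ) 1 ≃ₜ X :=
    Continuous.homeoOfEquivCompactToT2 (f := Equiv.ofBijective _ hbij) hc.domRestrict
  have hT := eq_Icc_of_connected_compact
    (((e.symm.isConnected_image).2 hAp).image _ continuous_subtype_val.continuousOn)
    ((hAc.image e.symm.continuous).image continuous_subtype_val)
  set T : Set ℝ := Subtype.val '' (e.symm '' (g '' Set.Icc a b)) with hTdef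
  have hT01 : T ⊆ Set.Icc 0 1 := by
    rintro _ ⟨x, -, rfl⟩; exact x.2
  have hfT : f '' T = g '' Set.Icc a b := by
    rw [hTdef, Set.image_image, Set.image_image]
    have : ∀ x, f (e.symm x : ℝ) = x := fun x => e.apply_symm_apply x
    simp only [this, Set.image_id']
  have hne : sInf T ≤ sSup T := by
    have : T.Nonempty := (hAp.nonempty.image _).image _
    rw [hT] at this
    exact Set.nonempty_Icc.1 this
  have h1 : sInf T ∈ T := by rw [hT]; exact ⟨by rw [← hT], by rw [← hT]; exact hne⟩
  have h2 : sSup T ∈ T := by rw [hT]; exact ⟨by rw [← hT]; exact hne, by rw [← hT]⟩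
  exact ⟨sInf T, sSup T, (hT01 h1).1, hne, (hT01 h2).2, by rw [← hT, hfT]⟩

theorem sVariation_lt_top_of_holder {s H : ℝ} (hs : 1 ≤ s) (hf : IsArcParam f) (hH : 0 < H)
    (h : ∀ x ∈ Set.Icc (0 : ℝ) 1, ∀ y ∈ Set.Icc (0 : ℝ) 1,
      dist (f x) (f y) ≤ H * |x - y| ^ (1 / s)) : sVariation X s < ⊤ := by
  have hs0 : 0 < s := by linarith
  refine lt_of_le_of_lt (iSup₂_le (a := ENNReal.ofReal (H ^ s)) fun P hP => ?_)
    ENNReal.ofReal_lt_top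
  obtain ⟨hPs, hPd, -⟩ := hP
  choose! c d hc hcd hd hA using fun A (hA : A ∈ P) => hf.exists_eq_image_Icc (hPs A hA)
  have hdiam : ∀ A ∈ P, Metric.ediam A ^ s ≤
      ENNReal.ofReal (H ^ s) * MeasureTheory.volume (Set.Ioo (c A) (d A)) := by
    intro A hAP
    have hle : Metric.ediam A ≤ ENNReal.ofReal (H * (d A - c A) ^ (1 / s)) := by
      refine Metric.ediam_le fun p hp q hq => ?_
      rw [hA A hAP] at hp hq
      obtain ⟨x, hx, rfl⟩ := hp
      obtain ⟨y, hy, rfl⟩ := hq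
      rw [edist_dist]
      refine ENNReal.ofReal_le_ofReal ((h x ?_ y ?_).trans ?_)
      · exact ⟨(hc A hAP).trans hx.1, hx.2.trans (hd A hAP)⟩
      · exact ⟨(hc A hAP).trans hy.1, hy.2.trans (hd A hAP)⟩
      · gcongr
        rw [abs_le]
        constructor <;> linarith [hx.1, hx.2, hy.1, hy.2]
    have hdc : 0 ≤ d A - c A := sub_nonneg.2 (hcd A hAP)
    calc Metric.ediam A ^ s ≤ ENNReal.ofReal (H * (d A - c A) ^ (1 / s)) ^ s := by gcongr
      _ = ENNReal.ofReal (H ^ s * (d A - c A)) := by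
        rw [ENNReal.ofReal_rpow_of_nonneg (by positivity) hs0.le,
          Real.mul_rpow hH.le (by positivity), ← Real.rpow_mul hdc, one_div_mul_cancel hs0.ne',
          Real.rpow_one]
      _ = _ := by rw [ENNReal.ofReal_mul (by positivity), Real.volume_Ioo]
  have hdisj : (P : Set (Set X)).PairwiseDisjoint fun A => Set.Ioo (c A) (d A) := by
    intro A hAP B hBP hAB
    refine Set.disjoint_left.2 fun x hxA hxB => ?_
    have := hPd hAP hBP hAB
    rw [hA A hAP, hA B hBP, hf.arcInterior_image_Icc (hc A hAP) (hcd A hAP) (hd A hAP),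
      hf.arcInterior_image_Icc (hc B hBP) (hcd B hBP) (hd B hBP)] at this
    exact Set.disjoint_left.1 this ⟨x, hxA, rfl⟩ ⟨x, hxB, rfl⟩
  calc ∑ A ∈ P, Metric.ediam A ^ s
      ≤ ∑ A ∈ P, ENNReal.ofReal (H ^ s) * MeasureTheory.volume (Set.Ioo (c A) (d A)) :=
        Finset.sum_le_sum hdiam
    _ = ENNReal.ofReal (H ^ s) * MeasureTheory.volume (⋃ A ∈ P, Set.Ioo (c A) (d A)) := by
        rw [← Finset.mul_sum, MeasureTheory.measure_biUnion_finset hdisj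
          fun _ _ => measurableSet_Ioo]
    _ ≤ ENNReal.ofReal (H ^ s) * MeasureTheory.volume (Set.Icc (0 : ℝ) 1) := by
        gcongr
        exact Set.iUnion₂_subset fun A hAP =>
          Set.Ioo_subset_Icc_self.trans (Set.Icc_subset_Icc (hc A hAP) (hd A hAP))
    _ = ENNReal.ofReal (H ^ s) := by simp

theorem IsArcParam.exists_partition_of_chainSum (hf : IsArcParam f) {s : ℝ} (hs : 0 ≤ s)
    {c S : ℝ} (h : ChainSum (fun x y => dist (f x) (f y) ^ s) 0 c S) (hc : c ≤ 1) :
    ∃ P : Finset (Set X), (∀ A ∈ P, IsSubarc A) ∧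
      ((P : Set (Set X)).Pairwise fun A B => Disjoint (arcInterior A) (arcInterior B)) ∧
      ⋃₀ (P : Set (Set X)) = f '' Set.Icc 0 c ∧
      ENNReal.ofReal S ≤ ∑ A ∈ P, Metric.ediam A ^ s := by
  classical
  induction h with
  | refl =>
    refine ⟨{f '' Set.Icc 0 0}, ?_, ?_, ?_, by simp⟩
    · simp only [Finset.mem_singleton, forall_eq]
      exact ⟨f, 0, 0, hf, le_rfl, le_rfl, zero_le_one, rfl⟩
    · rw [Finset.coe_singleton]
      exact Set.pairwise_singleton _ _
    · rw [Finset.coe_singleton, Set.sUnion_singleton]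
  | @step b c S h hbc ih =>
    obtain ⟨P, hPs, hPd, hPu, hPS⟩ := ih (hbc.le.trans hc)
    have hb0 : 0 ≤ b := h.le
    have hsub : ∀ A ∈ P, A ⊆ f '' Set.Icc 0 b := fun A hA => by
      rw [← hPu]; exact Set.subset_sUnion_of_mem hA
    have hdisj : ∀ A ∈ P, Disjoint (f '' Set.Ioc b c) A := by
      intro A hA
      refine Set.disjoint_left.2 ?_
      rintro _ ⟨x, hx, rfl⟩ hxA
      obtain ⟨y, hy, hyx⟩ := hsub A hA hxA
      have := hf.2.1 ⟨hy.1, by linarith [hy.2]⟩ ⟨by linarith [hx.1], hx.2.trans hc⟩ hyx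
      linarith [hy.2, hx.1]
    have hnot : f '' Set.Icc b c ∉ P := fun hmem =>
      Set.disjoint_left.1 (hdisj _ hmem) ⟨c, ⟨hbc, le_rfl⟩, rfl⟩ ⟨c, ⟨hbc.le, le_rfl⟩, rfl⟩
    refine ⟨insert (f '' Set.Icc b c) P, ?_, ?_, ?_, ?_⟩
    · intro A hA
      rcases Finset.mem_insert.1 hA with rfl | hA
      · exact ⟨f, b, c, hf, hb0, hbc.le, hc, rfl⟩
      · exact hPs A hA
    · rw [Finset.coe_insert]
      have hint : ∀ A ∈ P, Disjoint (arcInterior (f '' Set.Icc b c)) (arcInterior A) := by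
        intro A hA
        rw [hf.arcInterior_image_Icc hb0 hbc.le hc]
        exact (hdisj A hA).mono (Set.image_mono Set.Ioo_subset_Ioc_self) fun x hx => hx.1
      exact hPd.insert fun A hA _ => ⟨hint A hA, (hint A hA).symm⟩
    · rw [Finset.coe_insert, Set.sUnion_insert, hPu, ← Set.image_union, Set.union_comm,
        Set.Icc_union_Icc_eq_Icc hb0 hbc.le]
    · rw [Finset.sum_insert hnot, add_comm]
      refine ENNReal.ofReal_add_le.trans (add_le_add ?_ hPS)
      rw [← ENNReal.ofReal_rpow_of_nonneg dist_nonneg hs, ← edist_dist]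
      gcongr
      exact Metric.edist_le_ediam_of_mem ⟨b, ⟨le_rfl, hbc.le⟩, rfl⟩ ⟨c, ⟨hbc.le, le_rfl⟩, rfl⟩

theorem IsArcParam.exists_holder_of_chainSum_le {s M : ℝ} (hs : 0 < s) (hf : IsArcParam f)
    (hcont : Continuous f)
    (hM : ∀ S, ChainSum (fun x y => dist (f x) (f y) ^ s) 0 1 S → S ≤ M) :
    ∃ g : ℝ → X, Set.InjOn g (Set.Icc 0 1) ∧ g '' Set.Icc 0 1 = Set.univ ∧
      ∃ H > 0, ∀ x ∈ Set.Icc (0 : ℝ) 1, ∀ y ∈ Set.Icc (0 : ℝ) 1,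
        dist (g x) (g y) ≤ H * |x - y| ^ (1 / s) := by
  obtain ⟨-, hi, hsurj⟩ := hf
  set D : ℝ → ℝ → ℝ := fun x y => dist (f x) (f y) ^ s with hDdef
  have hD : ∀ x y, 0 ≤ D x y := fun x y => by positivity
  have hD₀ : ∀ x, D x x = 0 := fun x => by simp [hDdef, hs.ne']
  have hDc : Continuous fun p : ℝ × ℝ => D p.1 p.2 :=
    ((hcont.comp continuous_fst).dist (hcont.comp continuous_snd)).rpow_const
      fun _ => Or.inr hs.le
  set φ := chainVar D 0 with hφ
  have hφc : ContinuousOn φ (Set.Icc 0 1) := continuousOn_chainVar hD hD₀ hDc hM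
  have hφD : ∀ a b, 0 ≤ a → a ≤ b → b ≤ 1 → D a b ≤ φ b - φ a := fun a b ha hab hb => by
    linarith [apply_le_chainVar hD hD₀ hM ha hab hb, chainVar_add_le hD hM le_rfl ha hab hb]
  have hφ0 : φ 0 = 0 := le_antisymm
    (chainVar_le le_rfl fun S hS => hS.eq_zero.le) (chainVar_nonneg hD _ _)
  have hL : 0 < φ 1 := by
    have h₁ := hφD 0 1 le_rfl zero_le_one le_rfl
    have h₂ : 0 < D 0 1 := Real.rpow_pos_of_pos (dist_pos.2 fun h =>
      zero_ne_one (hi (Set.left_mem_Icc.2 zero_le_one) (Set.right_mem_Icc.2 zero_le_one) h)) _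
    linarith
  have hmem : ∀ t ∈ Set.Icc (0 : ℝ) 1, φ t / φ 1 ∈ Set.Icc (0 : ℝ) 1 := fun t ht =>
    ⟨div_nonneg (chainVar_nonneg hD _ _) hL.le,
      (div_le_one hL).2 (chainVar_mono hD hM le_rfl ht.1 ht.2 le_rfl)⟩
  have hinv : ∀ x ∈ Set.Icc (0 : ℝ) 1, ∃ t ∈ Set.Icc (0 : ℝ) 1, φ t = x * φ 1 := by
    intro x hx
    obtain ⟨t, ht, h⟩ := intermediate_value_Icc zero_le_one hφc
      (show x * φ 1 ∈ Set.Icc (φ 0) (φ 1) by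
        rw [hφ0]
        exact ⟨mul_nonneg hx.1 hL.le, mul_le_of_le_one_left hL.le hx.2⟩)
    exact ⟨t, ht, h⟩
  have hDle : ∀ a ∈ Set.Icc (0 : ℝ) 1, ∀ b ∈ Set.Icc (0 : ℝ) 1, D a b ≤ |φ a - φ b| := by
    intro a ha b hb
    rcases le_total a b with h | h
    · rw [abs_sub_comm]
      exact (hφD a b ha.1 h hb.2).trans (le_abs_self _)
    · rw [show D a b = D b a by simp only [hDdef, dist_comm]]
      exact (hφD b a hb.1 h ha.2).trans (le_abs_self _)
  have hφi : ∀ a ∈ Set.Icc (0 : ℝ) 1, ∀ b ∈ Set.Icc (0 : ℝ) 1, φ a = φ b → f a = f b := by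
    intro a ha b hb hab
    have h := hDle a ha b hb
    rw [hab, sub_self, abs_zero] at h
    have h' := (Real.rpow_eq_zero dist_nonneg hs.ne').1 (le_antisymm h (hD a b))
    exact dist_eq_zero.1 h'
  choose! τ hτ hφτ using hinv
  refine ⟨f ∘ τ, fun x hx y hy hxy => ?_, Set.eq_univ_of_forall fun p => ?_,
    φ 1 ^ (1 / s), by positivity, fun x hx y hy => ?_⟩
  · have := hi (hτ x hx) (hτ y hy) hxy
    have h := hφτ x hx
    rw [this, hφτ y hy] at h
    exact (mul_right_cancel₀ hL.ne' h).symm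
  · obtain ⟨t, ht, rfl⟩ : p ∈ f '' Set.Icc 0 1 := hsurj ▸ Set.mem_univ p
    refine ⟨φ t / φ 1, hmem t ht, hφi _ (hτ _ (hmem t ht)) _ ht ?_⟩
    rw [hφτ _ (hmem t ht), div_mul_cancel₀ _ hL.ne']
  · have h := hDle _ (hτ x hx) _ (hτ y hy)
    rw [hφτ x hx, hφτ y hy, ← sub_mul, abs_mul, abs_of_pos hL] at h
    rw [← Real.mul_rpow hL.le (abs_nonneg _), mul_comm, one_div]
    exact (Real.le_rpow_inv_iff_of_pos dist_nonneg (by positivity) hs).2 h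

end Arc

/-- A metric arc `X` is a `(1/s)`-Hölder arc (there is a homeomorphism `f` from `[0,1]`
onto `X` and `H > 0` with `d(f x, f y) ≤ H |x-y|^{1/s}`) iff `‖X‖_{s-var} < ∞`. -/
theorem isHolderArc_iff_sVariation_lt_top (X : Type*) [MetricSpace X]
    (hX : IsMetricArc X) (s : ℝ) (hs : 1 ≤ s) :
    (∃ f : ℝ → X, Set.InjOn f (Set.Icc 0 1) ∧ f '' Set.Icc 0 1 = Set.univ ∧
        ∃ H > 0, ∀ x ∈ Set.Icc (0:ℝ) 1, ∀ y ∈ Set.Icc (0:ℝ) 1,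
          dist (f x) (f y) ≤ H * |x - y| ^ (1 / s)) ↔
      sVariation X s < ⊤ := by
  have hs0 : 0 < s := by linarith
  constructor
  · rintro ⟨f, hi, hsurj, H, hH, h⟩
    refine sVariation_lt_top_of_holder hs ⟨fun x hx => ?_, hi, hsurj⟩ hH h
    rw [ContinuousWithinAt, tendsto_iff_dist_tendsto_zero]
    have hc : Continuous fun y : ℝ => H * |y - x| ^ (1 / s) :=
      continuous_const.mul
        (((continuous_id.sub continuous_const).abs).rpow_const fun _ => Or.inr (by positivity))
    have hlim := (hc.tendsto x).mono_left (nhdsWithin_le_nhds (s := Set.Icc 0 1))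
    rw [sub_self, abs_zero, Real.zero_rpow (by positivity), mul_zero] at hlim
    exact squeeze_zero' (Filter.Eventually.of_forall fun _ => dist_nonneg)
      (eventually_nhdsWithin_of_forall fun y hy => h y hy x hx) hlim
  · intro hlt
    obtain ⟨g, hg⟩ := hX
    have heq : Set.EqOn (Set.IccExtend zero_le_one ((Set.Icc (0 : ℝ) 1).domRestrict g)) g
        (Set.Icc 0 1) := fun x hx => Set.IccExtend_of_mem _ _ hx
    have hcont := (hg.1.domRestrict).Icc_extend' (h := zero_le_one)
    have hf : IsArcParam (Set.IccExtend zero_le_one ((Set.Icc (0 : ℝ) 1).domRestrict g)) :=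
      ⟨hcont.continuousOn, (heq.injOn_iff).2 hg.2.1, heq.image_eq.trans hg.2.2⟩
    refine hf.exists_holder_of_chainSum_le hs0 hcont (M := (sVariation X s).toReal) fun S hS => ?_
    obtain ⟨P, hPs, hPd, hPu, hPS⟩ := hf.exists_partition_of_chainSum hs0.le hS le_rfl
    refine (ENNReal.ofReal_le_iff_le_toReal hlt.ne).1 (hPS.trans ?_)
    exact le_iSup₂_of_le (f := fun (P : Finset (Set X)) (_ : IsArcPartition P) =>
      ∑ A ∈ P, Metric.ediam A ^ s) P ⟨hPs, hPd, hPu.trans hf.2.2⟩ le_rfl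
end

section
/- Let s ≥ 1, let X be a metric arc with ‖X‖_{s-var} < ∞, and let f : [0,1] → X be a homeomorphism. Then the function t ↦ ‖f([0,t])‖_{s-var} is continuous on [0,1]. -/
open scoped ENNReal

section ArcVariation

open Set Filter Topology

/-- `P` is a finite family of nondegenerate non-overlapping subintervals `[p.1, p.2]`
of `[a, b]`. -/
structure IsIntervalPacking (P : Finset (ℝ × ℝ)) (a b : ℝ) : Prop where
  left_le : ∀ p ∈ P, a ≤ p.1
  lt : ∀ p ∈ P, p.1 < p.2
  le_right : ∀ p ∈ P, p.2 ≤ b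
  nonoverlapping : ∀ p ∈ P, ∀ q ∈ P, p ≠ q → p.2 ≤ q.1 ∨ q.2 ≤ p.1

theorem isIntervalPacking_empty (a b : ℝ) : IsIntervalPacking ∅ a b := by
  constructor <;> simp

/-- The supremum of `∑ edist (f p.1) (f p.2) ^ s` over all interval packings of `[a, b]`. -/
noncomputable def chordVariation {X : Type*} [MetricSpace X] (f : ℝ → X) (s a b : ℝ) : ℝ≥0∞ :=
  ⨆ (P : Finset (ℝ × ℝ)) (_ : IsIntervalPacking P a b), ∑ p ∈ P, edist (f p.1) (f p.2) ^ s

section ChordVariation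

variable {X : Type*} [MetricSpace X] {f : ℝ → X} {s a b c : ℝ}

theorem IsIntervalPacking.sum_le_chordVariation {P : Finset (ℝ × ℝ)}
    (hP : IsIntervalPacking P a b) :
    ∑ p ∈ P, edist (f p.1) (f p.2) ^ s ≤ chordVariation f s a b :=
  le_iSup₂_of_le (f := fun (P : Finset (ℝ × ℝ)) (_ : IsIntervalPacking P a b) =>
    ∑ p ∈ P, edist (f p.1) (f p.2) ^ s) P hP le_rfl

/-- Indexed families of possibly degenerate non-overlapping intervals also give lower bounds. -/
theorem sum_edist_rpow_le_chordVariation (hs : 0 < s) {ι : Type*} (S : Finset ι) (u v : ι → ℝ)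
    (hau : ∀ i ∈ S, a ≤ u i) (huv : ∀ i ∈ S, u i ≤ v i) (hvb : ∀ i ∈ S, v i ≤ b)
    (hno : ∀ i ∈ S, ∀ j ∈ S, i ≠ j → u i < v i → u j < v j → v i ≤ u j ∨ v j ≤ u i) :
    ∑ i ∈ S, edist (f (u i)) (f (v i)) ^ s ≤ chordVariation f s a b := by
  classical
  have h1 : ∑ i ∈ S with u i < v i, edist (f (u i)) (f (v i)) ^ s
      = ∑ i ∈ S, edist (f (u i)) (f (v i)) ^ s := by
    refine Finset.sum_filter_of_ne fun i hi hne => lt_of_le_of_ne (huv i hi) fun h => hne ?_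
    simp [h, hs]
  have hinj : Set.InjOn (fun i => (u i, v i)) (S.filter fun i => u i < v i) := by
    intro i hi j hj hij
    simp only [Finset.coe_filter, mem_ofPred_eq, Prod.mk.injEq] at hi hj hij
    by_contra hne
    rcases hno i hi.1 j hj.1 hne hi.2 hj.2 with h | h <;> linarith [hi.2, hj.2]
  rw [← h1, ← Finset.sum_image (f := fun p : ℝ × ℝ => edist (f p.1) (f p.2) ^ s) hinj]
  apply IsIntervalPacking.sum_le_chordVariation
  constructor
  · simp only [Finset.mem_image, Finset.mem_filter]
    rintro _ ⟨i, hi, rfl⟩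
    exact hau i hi.1
  · simp only [Finset.mem_image, Finset.mem_filter]
    rintro _ ⟨i, hi, rfl⟩
    exact hi.2
  · simp only [Finset.mem_image, Finset.mem_filter]
    rintro _ ⟨i, hi, rfl⟩
    exact hvb i hi.1
  · simp only [Finset.mem_image, Finset.mem_filter]
    rintro _ ⟨i, hi, rfl⟩ _ ⟨j, hj, rfl⟩ hne
    exact hno i hi.1 j hj.1 (fun h => hne (by rw [h])) hi.2 hj.2

theorem IsIntervalPacking.sum_edist_comp_le {P : Finset (ℝ × ℝ)} (hP : IsIntervalPacking P a b)
    (hs : 0 < s) {φ : ℝ → ℝ} {a' b' : ℝ} (hφ : MonotoneOn φ (Icc a b))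
    (hmaps : MapsTo φ (Icc a b) (Icc a' b')) :
    ∑ p ∈ P, edist (f (φ p.1)) (f (φ p.2)) ^ s ≤ chordVariation f s a' b' := by
  have h1 : ∀ p ∈ P, p.1 ∈ Icc a b := fun p hp =>
    ⟨hP.left_le p hp, (hP.lt p hp).le.trans (hP.le_right p hp)⟩
  have h2 : ∀ p ∈ P, p.2 ∈ Icc a b := fun p hp =>
    ⟨(hP.left_le p hp).trans (hP.lt p hp).le, hP.le_right p hp⟩
  refine sum_edist_rpow_le_chordVariation hs P (fun p => φ p.1) (fun p => φ p.2)
    (fun p hp => (hmaps (h1 p hp)).1) (fun p hp => hφ (h1 p hp) (h2 p hp) (hP.lt p hp).le)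
    (fun p hp => (hmaps (h2 p hp)).2) fun p hp q hq hne _ _ => ?_
  exact (hP.nonoverlapping p hp q hq hne).imp (fun h => hφ (h2 p hp) (h1 q hq) h)
    fun h => hφ (h2 q hq) (h1 p hp) h

theorem chordVariation_comp_le {Y : Type*} [MetricSpace Y] {g : ℝ → Y} (hs : 0 < s) {φ : ℝ → ℝ}
    {a' b' : ℝ} (hφ : MonotoneOn φ (Icc a b)) (hmaps : MapsTo φ (Icc a b) (Icc a' b'))
    (hg : ∀ x ∈ Icc a b, ∀ y ∈ Icc a b, edist (g x) (g y) = edist (f (φ x)) (f (φ y))) :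
    chordVariation g s a b ≤ chordVariation f s a' b' := by
  refine iSup₂_le fun P hP => le_trans (le_of_eq ?_) (hP.sum_edist_comp_le (f := f) hs hφ hmaps)
  refine Finset.sum_congr rfl fun p hp => ?_
  rw [hg p.1 ⟨hP.left_le p hp, (hP.lt p hp).le.trans (hP.le_right p hp)⟩ p.2
    ⟨(hP.left_le p hp).trans (hP.lt p hp).le, hP.le_right p hp⟩]

theorem chordVariation_mono (hs : 0 < s) {a' b' : ℝ} (h : Icc a b ⊆ Icc a' b') :
    chordVariation f s a b ≤ chordVariation f s a' b' :=
  chordVariation_comp_le hs (φ := id) monotoneOn_id h fun _ _ _ _ => rfl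

theorem chordVariation_self (f : ℝ → X) (s a : ℝ) : chordVariation f s a a = 0 := by
  refine le_antisymm (iSup₂_le fun P hP => ?_) zero_le
  have hempty : P = ∅ := Finset.eq_empty_of_forall_notMem fun p hp => by
    linarith [hP.left_le p hp, hP.lt p hp, hP.le_right p hp]
  rw [hempty, Finset.sum_empty]

theorem chordVariation_add_le (f : ℝ → X) (s a b c : ℝ) (hab : a ≤ b) (hbc : b ≤ c) :
    chordVariation f s a b + chordVariation f s b c ≤ chordVariation f s a c := by
  classical
  refine ENNReal.biSup_add_biSup_le' ⟨∅, isIntervalPacking_empty a b⟩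
    ⟨∅, isIntervalPacking_empty b c⟩ fun P hP Q hQ => ?_
  rw [← Finset.sum_union]
  · apply IsIntervalPacking.sum_le_chordVariation
    constructor
    · intro p hp
      rcases Finset.mem_union.1 hp with h | h
      · exact hP.left_le p h
      · exact hab.trans (hQ.left_le p h)
    · intro p hp
      exact (Finset.mem_union.1 hp).elim (hP.lt p) (hQ.lt p)
    · intro p hp
      rcases Finset.mem_union.1 hp with h | h
      · exact (hP.le_right p h).trans hbc
      · exact hQ.le_right p h
    · intro p hp q hq hne
      rcases Finset.mem_union.1 hp with h | h <;> rcases Finset.mem_union.1 hq with h' | h'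
      · exact hP.nonoverlapping p h q h' hne
      · exact .inl ((hP.le_right p h).trans (hQ.left_le q h'))
      · exact .inr ((hP.le_right q h').trans (hQ.left_le p h))
      · exact hQ.nonoverlapping p h q h' hne
  · rw [Finset.disjoint_left]
    intro p h h'
    linarith [hP.le_right p h, hQ.left_le p h', hP.lt p h]

/-- A Minkowski-type inequality for concatenation. -/
theorem chordVariation_rpow_le_add (hs : 1 ≤ s) (hab : a ≤ b) (hbc : b ≤ c) :
    chordVariation f s a c ^ (1 / s) ≤
      chordVariation f s a b ^ (1 / s) + chordVariation f s b c ^ (1 / s) := by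
  have hs0 : 0 < s := by linarith
  rw [one_div, ENNReal.rpow_inv_le_iff hs0, ← one_div]
  refine iSup₂_le fun P hP => ?_
  rw [← ENNReal.rpow_inv_le_iff hs0, ← one_div]
  have hL := hP.sum_edist_comp_le (f := f) (φ := fun x => min x b) (a' := a) (b' := b) hs0
    (fun x _ y _ h => min_le_min_right b h) fun x hx => ⟨le_min hx.1 hab, min_le_right _ _⟩
  have hR := hP.sum_edist_comp_le (f := f) (φ := fun x => max x b) (a' := b) (b' := c) hs0
    (fun x _ y _ h => max_le_max_right b h) fun x hx => ⟨le_max_right _ _, max_le hx.2 hbc⟩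
  have hs1 : 0 ≤ 1 / s := by positivity
  refine le_trans ?_ (add_le_add (ENNReal.rpow_le_rpow hL hs1) (ENNReal.rpow_le_rpow hR hs1))
  refine le_trans ?_ (ENNReal.Lp_add_le _ _ _ hs)
  gcongr with p hp
  have hlt := hP.lt p hp
  rcases le_total p.2 b with h | h
  · simp [h, hlt.le.trans h]
  rcases le_total p.1 b with h' | h'
  · simpa [h, h'] using edist_triangle (f p.1) (f b) (f p.2)
  · simp [h, h']

theorem eventually_lt_chordVariation_right (hs : 0 < s) (hf : Continuous f) {r : ℝ≥0∞}
    (hr : r < chordVariation f s a b) :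
    ∀ᶠ x in 𝓝 b, a ≤ x → r < chordVariation f s a x := by
  simp only [chordVariation, lt_iSup_iff] at hr
  obtain ⟨P, hP, hr⟩ := hr
  have hcont : Continuous fun x =>
      ∑ p ∈ P, edist (f (min p.1 x)) (f (min p.2 x)) ^ s := by
    refine continuous_finsetSum _ fun p _ => ?_
    exact (ENNReal.continuous_rpow_const).comp
      ((hf.comp (by fun_prop)).edist (hf.comp (by fun_prop)))
  have hb : ∑ p ∈ P, edist (f (min p.1 b)) (f (min p.2 b)) ^ s
      = ∑ p ∈ P, edist (f p.1) (f p.2) ^ s := by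
    refine Finset.sum_congr rfl fun p hp => ?_
    rw [min_eq_left (hP.le_right p hp), min_eq_left ((hP.lt p hp).le.trans (hP.le_right p hp))]
  rw [← hb] at hr
  filter_upwards [hcont.continuousAt.eventually_const_lt hr] with x hx hax
  exact hx.trans_le (hP.sum_edist_comp_le (φ := fun y => min y x) hs
    (fun _ _ _ _ h => min_le_min_right x h) fun y hy => ⟨le_min hy.1 hax, min_le_right _ _⟩)

theorem eventually_lt_chordVariation_left (hs : 0 < s) (hf : Continuous f) {r : ℝ≥0∞}
    (hr : r < chordVariation f s a b) :
    ∀ᶠ x in 𝓝 a, x ≤ b → r < chordVariation f s x b := by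
  simp only [chordVariation, lt_iSup_iff] at hr
  obtain ⟨P, hP, hr⟩ := hr
  have hcont : Continuous fun x =>
      ∑ p ∈ P, edist (f (max p.1 x)) (f (max p.2 x)) ^ s := by
    refine continuous_finsetSum _ fun p _ => ?_
    exact (ENNReal.continuous_rpow_const).comp
      ((hf.comp (by fun_prop)).edist (hf.comp (by fun_prop)))
  have ha : ∑ p ∈ P, edist (f (max p.1 a)) (f (max p.2 a)) ^ s
      = ∑ p ∈ P, edist (f p.1) (f p.2) ^ s := by
    refine Finset.sum_congr rfl fun p hp => ?_
    rw [max_eq_left (hP.left_le p hp), max_eq_left ((hP.left_le p hp).trans (hP.lt p hp).le)]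
  rw [← ha] at hr
  filter_upwards [hcont.continuousAt.eventually_const_lt hr] with x hx hxb
  exact hx.trans_le (hP.sum_edist_comp_le (φ := fun y => max y x) hs
    (fun _ _ _ _ h => max_le_max_right x h) fun y hy => ⟨le_max_right _ _, max_le hy.2 hxb⟩)

theorem tendsto_chordVariation_nhdsGE (hs : 0 < s) (hf : Continuous f)
    (hfin : chordVariation f s a b ≠ ⊤) :
    Tendsto (fun x => chordVariation f s a x) (𝓝[Icc a b] a) (𝓝 0) := by
  rw [ENNReal.tendsto_nhds_zero]
  intro ε hε
  rcases eq_or_ne (chordVariation f s a b) 0 with h0 | h0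
  · filter_upwards [self_mem_nhdsWithin] with x hx
    exact (chordVariation_mono hs (Icc_subset_Icc_right hx.2)).trans (by simp [h0])
  have hlt : chordVariation f s a b - ε < chordVariation f s a b :=
    ENNReal.sub_lt_self hfin h0 hε.ne'
  filter_upwards [self_mem_nhdsWithin,
    mem_nhdsWithin_of_mem_nhds (eventually_lt_chordVariation_left hs hf hlt)] with x hx h
  have h1 := chordVariation_add_le f s a x b hx.1 hx.2
  have h2 : chordVariation f s x b ≠ ⊤ :=
    ne_top_of_le_ne_top hfin (chordVariation_mono hs (Icc_subset_Icc_left hx.1))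
  have h3 : chordVariation f s a b ≤ ε + chordVariation f s x b := by
    rw [add_comm, ← tsub_le_iff_right]
    exact (h hx.2).le
  exact (ENNReal.add_le_add_iff_right h2).1 (h1.trans h3)

theorem continuousOn_chordVariation (hs : 1 ≤ s) (hf : Continuous f)
    (hfin : chordVariation f s a b ≠ ⊤) :
    ContinuousOn (fun x => chordVariation f s a x) (Icc a b) := by
  have hs0 : 0 < s := by linarith
  intro t ht
  refine tendsto_order.2 ⟨fun r hr => ?_, fun r hr => ?_⟩
  · filter_upwards [self_mem_nhdsWithin,
      mem_nhdsWithin_of_mem_nhds (eventually_lt_chordVariation_right hs0 hf hr)] with x hx h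
    exact h hx.1
  · have hsplit : Icc a b = Icc a t ∪ Icc t b := (Icc_union_Icc_eq_Icc ht.1 ht.2).symm
    rw [hsplit, nhdsWithin_union, eventually_sup]
    constructor
    · filter_upwards [self_mem_nhdsWithin] with x hx
      exact (chordVariation_mono hs0 (Icc_subset_Icc_right hx.2)).trans_lt hr
    · have hfin' : chordVariation f s t b ≠ ⊤ :=
        ne_top_of_le_ne_top hfin (chordVariation_mono hs0 (Icc_subset_Icc_left ht.1))
      have h1 := tendsto_chordVariation_nhdsGE hs0 hf hfin'
      have h2 := ((ENNReal.continuous_rpow_const (y := 1 / s)).tendsto 0).comp h1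
      have h3 := h2.const_add (chordVariation f s a t ^ (1 / s))
      rw [ENNReal.zero_rpow_of_pos (by positivity), add_zero] at h3
      have h4 := h3.eventually_lt_const
        (ENNReal.rpow_lt_rpow hr (by positivity : 0 < 1 / s))
      filter_upwards [self_mem_nhdsWithin, h4] with x hx h
      have := (chordVariation_rpow_le_add (f := f) hs ht.1 hx.1).trans_lt h
      exact (ENNReal.rpow_lt_rpow_iff (by positivity)).1 this

end ChordVariation

section Arc

variable {X : Type*} [MetricSpace X] {f : ℝ → X} {s a b : ℝ}

theorem IsArcParam.isCompact_image (hf : IsArcParam f) (ha : 0 ≤ a) (hb : b ≤ 1) :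
    IsCompact (f '' Icc a b) :=
  isCompact_Icc.image_of_continuousOn (hf.1.mono (Icc_subset_Icc ha hb))

theorem IsArcParam.isPreconnected_image (hf : IsArcParam f) {T : Set ℝ} (hT : T.OrdConnected)
    (hT01 : T ⊆ Icc 0 1) : IsPreconnected (f '' T) :=
  hT.isPreconnected.image f (hf.1.mono hT01)

/-- A preconnected set meeting both sides of a point of an arc contains that point. -/
theorem IsArcParam.mem_of_isPreconnected (hf : IsArcParam f) {A : Set X} (hA : IsPreconnected A)
    {x y z : ℝ} (hx : 0 ≤ x) (hxy : x ≤ y) (hyz : y ≤ z) (hz : z ≤ 1) (hxA : f x ∈ A)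
    (hzA : f z ∈ A) : f y ∈ A := by
  have hy0 := hx.trans hxy
  have hy1 := hyz.trans hz
  obtain ⟨w, hwA, ⟨u, hu, rfl⟩, ⟨v, hv, huv⟩⟩ := isPreconnected_closed_iff.1 hA
    (f '' Icc 0 y) (f '' Icc y 1) (hf.isCompact_image le_rfl hy1).isClosed
    (hf.isCompact_image hy0 le_rfl).isClosed
    (by rw [← image_union, Icc_union_Icc_eq_Icc hy0 hy1, hf.2.2]; exact subset_univ _)
    ⟨f x, hxA, mem_image_of_mem f ⟨hx, hxy⟩⟩ ⟨f z, hzA, mem_image_of_mem f ⟨hyz, hz⟩⟩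
  have := hf.2.1 ⟨hy0.trans hv.1, hv.2⟩ ⟨hu.1, hu.2.trans hy1⟩ huv
  rwa [le_antisymm hu.2 (this ▸ hv.1)] at hwA

theorem IsArcParam.arcInterior_image (hf : IsArcParam f) (ha : 0 ≤ a) (hb : b ≤ 1) :
    arcInterior (f '' Icc a b) = f '' Ioo a b := by
  have hsub : Icc a b ⊆ Icc 0 1 := Icc_subset_Icc ha hb
  have hdiff : ∀ m ∈ Icc a b, f '' Icc a b \ {f m} = f '' (Icc a b \ {m}) := fun m hm => by
    rw [← image_singleton, (hf.2.1.mono hsub).image_sdiff_subset (singleton_subset_iff.2 hm)]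
  apply Subset.antisymm
  · rintro _ ⟨⟨m, hm, rfl⟩, hnot⟩
    refine mem_image_of_mem f ⟨lt_of_le_of_ne hm.1 ?_, lt_of_le_of_ne hm.2 ?_⟩
    · rintro rfl
      refine hnot ?_
      rw [hdiff _ hm, Icc_sdiff_left]
      exact hf.isPreconnected_image ordConnected_Ioc (Ioc_subset_Icc_self.trans hsub)
    · rintro rfl
      refine hnot ?_
      rw [hdiff _ hm, Icc_sdiff_right]
      exact hf.isPreconnected_image ordConnected_Ico (Ico_subset_Icc_self.trans hsub)
  · rintro _ ⟨m, hm, rfl⟩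
    have hm' := Ioo_subset_Icc_self hm
    refine ⟨mem_image_of_mem f hm', fun hpre => ?_⟩
    have hab := hm.1.trans hm.2
    rw [hdiff m hm'] at hpre
    have := hf.mem_of_isPreconnected hpre ha hm.1.le hm.2.le hb
      (mem_image_of_mem f ⟨left_mem_Icc.2 hab.le, hm.1.ne⟩)
      (mem_image_of_mem f ⟨right_mem_Icc.2 hab.le, hm.2.ne'⟩)
    rw [← hdiff m hm'] at this
    exact this.2 rfl

/-- Every subarc is the image of an interval under any prescribed parametrization. -/
theorem IsSubarc.exists_eq_image {A : Set X} (hA : IsSubarc A) (hf : IsArcParam f) :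
    ∃ a b : ℝ, 0 ≤ a ∧ a ≤ b ∧ b ≤ 1 ∧ A = f '' Icc a b := by
  obtain ⟨g, a, b, hg, ha, hab, hb, rfl⟩ := hA
  have hpre := hg.isPreconnected_image (T := Icc a b) ordConnected_Icc (Icc_subset_Icc ha hb)
  set T := Icc 0 1 ∩ f ⁻¹' (g '' Icc a b) with hT
  have himage : f '' T = g '' Icc a b := by
    rw [hT, image_inter_preimage, hf.2.2, univ_inter]
  have hcompact : IsCompact T := isCompact_Icc.of_isClosed_subset
    (hf.1.preimage_isClosed_of_isClosed isClosed_Icc (hg.isCompact_image ha hb).isClosed)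
    inter_subset_left
  have hord : T.OrdConnected := ⟨fun x hx z hz y hy =>
    ⟨⟨hx.1.1.trans hy.1, hy.2.trans hz.1.2⟩,
      hf.mem_of_isPreconnected hpre hx.1.1 hy.1 hy.2 hz.1.2 hx.2 hz.2⟩⟩
  have hne : T.Nonempty := by
    rw [← image_nonempty (f := f), himage]
    exact (nonempty_Icc.2 hab).image g
  have hIcc := eq_Icc_of_connected_compact ⟨hne, hord.isPreconnected⟩ hcompact
  have hle : sInf T ≤ sSup T := by
    rw [hIcc] at hne
    exact nonempty_Icc.1 hne
  exact ⟨sInf T, sSup T, (hcompact.sInf_mem hne).1.1, hle, (hcompact.sSup_mem hne).1.2, by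
    rw [← hIcc, himage]⟩

theorem exists_edist_eq_ediam_image (hf : ContinuousOn f (Icc a b)) (hab : a ≤ b) :
    ∃ u v, a ≤ u ∧ u ≤ v ∧ v ≤ b ∧ edist (f u) (f v) = Metric.ediam (f '' Icc a b) := by
  have hne : (Icc a b ×ˢ Icc a b).Nonempty := (nonempty_Icc.2 hab).prod (nonempty_Icc.2 hab)
  have hcont : ContinuousOn (fun p : ℝ × ℝ => edist (f p.1) (f p.2)) (Icc a b ×ˢ Icc a b) :=
    continuous_edist.comp_continuousOn
      ((hf.comp continuousOn_fst fun p hp => hp.1).prodMk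
        (hf.comp continuousOn_snd fun p hp => hp.2))
  obtain ⟨⟨u, v⟩, ⟨hu, hv⟩, hmax⟩ :=
    (isCompact_Icc.prod isCompact_Icc).exists_isMaxOn hne hcont
  have heq : edist (f u) (f v) = Metric.ediam (f '' Icc a b) := by
    refine le_antisymm
      (Metric.edist_le_ediam_of_mem (mem_image_of_mem f hu) (mem_image_of_mem f hv)) ?_
    refine Metric.ediam_le ?_
    rintro _ ⟨x, hx, rfl⟩ _ ⟨y, hy, rfl⟩
    exact hmax (mk_mem_prod hx hy)
  rcases le_total u v with h | h
  · exact ⟨u, v, hu.1, h, hv.2, heq⟩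
  · exact ⟨v, u, hv.1, h, hu.2, by rw [edist_comm, heq]⟩

/-- Every interval packing of `[a, b]` is contained in one that covers `[a, b]`. -/
theorem IsIntervalPacking.exists_cover {P : Finset (ℝ × ℝ)} (hP : IsIntervalPacking P a b)
    (hab : a < b) :
    ∃ Q, P ⊆ Q ∧ IsIntervalPacking Q a b ∧ ∀ x ∈ Icc a b, ∃ p ∈ Q, x ∈ Icc p.1 p.2 := by
  classical
  set E : Finset ℝ := insert a (insert b (P.image Prod.fst ∪ P.image Prod.snd)) with hE
  have haE : a ∈ E := by simp [hE]
  have hbE : b ∈ E := by simp [hE]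
  have hP1 : ∀ p ∈ P, p.1 ∈ E := fun p hp => by
    simp only [hE, Finset.mem_insert, Finset.mem_union]
    exact .inr (.inr (.inl (Finset.mem_image_of_mem _ hp)))
  have hP2 : ∀ p ∈ P, p.2 ∈ E := fun p hp => by
    simp only [hE, Finset.mem_insert, Finset.mem_union]
    exact .inr (.inr (.inr (Finset.mem_image_of_mem _ hp)))
  have hEcases : ∀ z ∈ E, z = a ∨ z = b ∨ ∃ p ∈ P, z = p.1 ∨ z = p.2 := by
    intro z hz
    simp only [hE, Finset.mem_insert, Finset.mem_union, Finset.mem_image] at hz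
    rcases hz with h | h | ⟨p, hp, h⟩ | ⟨p, hp, h⟩
    · exact .inl h
    · exact .inr (.inl h)
    · exact .inr (.inr ⟨p, hp, .inl h.symm⟩)
    · exact .inr (.inr ⟨p, hp, .inr h.symm⟩)
  have hEmem : ∀ z ∈ E, z ∈ Icc a b := by
    intro z hz
    rcases hEcases z hz with rfl | rfl | ⟨p, hp, rfl | rfl⟩
    · exact left_mem_Icc.2 hab.le
    · exact right_mem_Icc.2 hab.le
    · exact ⟨hP.left_le p hp, (hP.lt p hp).le.trans (hP.le_right p hp)⟩
    · exact ⟨(hP.left_le p hp).trans (hP.lt p hp).le, hP.le_right p hp⟩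
  set Q : Finset (ℝ × ℝ) :=
    (E ×ˢ E).filter fun p => p.1 < p.2 ∧ ∀ z ∈ E, z ≤ p.1 ∨ p.2 ≤ z with hQ
  have hQiff : ∀ p, p ∈ Q ↔
      (p.1 ∈ E ∧ p.2 ∈ E) ∧ p.1 < p.2 ∧ ∀ z ∈ E, z ≤ p.1 ∨ p.2 ≤ z := by
    intro p
    rw [hQ, Finset.mem_filter, Finset.mem_product]
  refine ⟨Q, fun p hp => (hQiff p).2 ⟨⟨hP1 p hp, hP2 p hp⟩, hP.lt p hp, fun z hz => ?_⟩,
    ⟨fun p hp => (hEmem _ ((hQiff p).1 hp).1.1).1, fun p hp => ((hQiff p).1 hp).2.1,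
      fun p hp => (hEmem _ ((hQiff p).1 hp).1.2).2, fun p hp q hq hne => ?_⟩, fun x hx => ?_⟩
  · rcases hEcases z hz with rfl | rfl | ⟨q, hq, hzq⟩
    · exact .inl (hP.left_le p hp)
    · exact .inr (hP.le_right p hp)
    · rcases eq_or_ne p q with rfl | hne
      · exact hzq.imp (fun h => h.le) fun h => h.ge
      · have hlt := hP.lt q hq
        rcases hP.nonoverlapping p hp q hq hne with h | h <;> rcases hzq with rfl | rfl
        · exact .inr h
        · exact .inr (h.trans hlt.le)
        · exact .inl (hlt.le.trans h)
        · exact .inl h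
  · obtain ⟨⟨hp1, hp2⟩, hplt, hpE⟩ := (hQiff p).1 hp
    obtain ⟨⟨hq1, hq2⟩, hqlt, hqE⟩ := (hQiff q).1 hq
    by_contra! hov
    refine hne (Prod.ext ?_ ?_)
    · exact le_antisymm ((hqE _ hp1).resolve_right (by linarith [hov.2]))
        ((hpE _ hq1).resolve_right (by linarith [hov.1]))
    · exact le_antisymm ((hpE _ hq2).resolve_left (by linarith [hov.2]))
        ((hqE _ hp2).resolve_left (by linarith [hov.1]))
  · have hconsec : ∀ y, a ≤ y → y < b → ∃ p ∈ Q, p.1 ≤ y ∧ y < p.2 := by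
      intro y hay hyb
      obtain ⟨u, hu, hu'⟩ := (E.filter (· ≤ y)).exists_max_image id
        ⟨a, Finset.mem_filter.2 ⟨haE, hay⟩⟩
      obtain ⟨v, hv, hv'⟩ := (E.filter (y < ·)).exists_min_image id
        ⟨b, Finset.mem_filter.2 ⟨hbE, hyb⟩⟩
      rw [Finset.mem_filter] at hu hv
      refine ⟨(u, v), (hQiff _).2 ⟨⟨hu.1, hv.1⟩, hu.2.trans_lt hv.2, fun z hz => ?_⟩, hu.2, hv.2⟩
      rcases le_or_gt z y with h | h
      · exact .inl (hu' z (Finset.mem_filter.2 ⟨hz, h⟩))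
      · exact .inr (hv' z (Finset.mem_filter.2 ⟨hz, h⟩))
    rcases hx.2.lt_or_eq with h | rfl
    · obtain ⟨p, hp, h1, h2⟩ := hconsec x hx.1 h
      exact ⟨p, hp, h1, h2.le⟩
    · obtain ⟨u, hu, hu'⟩ := (E.filter (· < x)).exists_max_image id
        ⟨a, Finset.mem_filter.2 ⟨haE, hab⟩⟩
      rw [Finset.mem_filter] at hu
      refine ⟨(u, x), (hQiff _).2 ⟨⟨hu.1, hbE⟩, hu.2, fun z hz => ?_⟩, hu.2.le, le_rfl⟩
      rcases lt_or_ge z x with h | h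
      · exact .inl (hu' z (Finset.mem_filter.2 ⟨hz, h⟩))
      · exact .inr h

theorem sVariation_eq_chordVariation (hs : 0 < s) (hf : IsArcParam f) :
    sVariation X s = chordVariation f s 0 1 := by
  classical
  apply le_antisymm
  · refine iSup₂_le fun P hP => ?_
    have hdata : ∀ A ∈ P, ∃ c d u v : ℝ, 0 ≤ c ∧ c ≤ u ∧ u ≤ v ∧ v ≤ d ∧ d ≤ 1 ∧
        A = f '' Icc c d ∧ edist (f u) (f v) = Metric.ediam A := by
      intro A hA
      obtain ⟨c, d, hc, hcd, hd, rfl⟩ := (hP.1 A hA).exists_eq_image hf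
      obtain ⟨u, v, hu, huv, hv, h⟩ :=
        exists_edist_eq_ediam_image (hf.1.mono (Icc_subset_Icc hc hd)) hcd
      exact ⟨c, d, u, v, hc, hu, huv, hv, hd, rfl, h⟩
    choose! c d u v hc hu huv hv hd hA h using hdata
    refine (Finset.sum_congr rfl fun A hAP => congrArg (· ^ s) (h A hAP).symm).trans_le ?_
    refine sum_edist_rpow_le_chordVariation hs P u v (fun A hAP => (hc A hAP).trans (hu A hAP))
      huv (fun A hAP => (hv A hAP).trans (hd A hAP)) fun A hAP B hBP hne hltA hltB => ?_
    have hdisj := hP.2.1 hAP hBP hne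
    rw [hA A hAP, hA B hBP, hf.arcInterior_image (hc A hAP) (hd A hAP),
      hf.arcInterior_image (hc B hBP) (hd B hBP)] at hdisj
    by_contra! hov
    obtain ⟨m, hm1, hm2⟩ := exists_between
      (max_lt (lt_min hltA hov.2) (lt_min hov.1 hltB) : max (u A) (u B) < min (v A) (v B))
    rw [max_lt_iff] at hm1
    rw [lt_min_iff] at hm2
    exact disjoint_left.1 hdisj
      (mem_image_of_mem f ⟨(hu A hAP).trans_lt hm1.1, hm2.1.trans_le (hv A hAP)⟩)
      (mem_image_of_mem f ⟨(hu B hBP).trans_lt hm1.2, hm2.2.trans_le (hv B hBP)⟩)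
  · refine iSup₂_le fun P hP => ?_
    obtain ⟨Q, hPQ, hQ, hcover⟩ := hP.exists_cover one_pos
    have hsub : ∀ p ∈ Q, Icc p.1 p.2 ⊆ Icc 0 1 := fun p hp =>
      Icc_subset_Icc (hQ.left_le p hp) (hQ.le_right p hp)
    have hinj : Set.InjOn (fun p : ℝ × ℝ => f '' Icc p.1 p.2) Q := by
      intro p hp q hq hpq
      have := (hf.2.1.image_eq_image_iff (hsub p hp) (hsub q hq)).1 hpq
      have h1 := (Icc_subset_Icc_iff (hQ.lt p hp).le).1 this.subset
      have h2 := (Icc_subset_Icc_iff (hQ.lt q hq).le).1 this.superset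
      exact Prod.ext (le_antisymm h2.1 h1.1) (le_antisymm h1.2 h2.2)
    have hpart : IsArcPartition (Q.image fun p : ℝ × ℝ => f '' Icc p.1 p.2) := by
      refine ⟨?_, ?_, ?_⟩
      · simp only [Finset.mem_image]
        rintro _ ⟨p, hp, rfl⟩
        exact ⟨f, p.1, p.2, hf, hQ.left_le p hp, (hQ.lt p hp).le, hQ.le_right p hp, rfl⟩
      · simp only [Finset.coe_image]
        rintro _ ⟨p, hp, rfl⟩ _ ⟨q, hq, rfl⟩ hne
        simp only
        rw [hf.arcInterior_image (hQ.left_le p hp) (hQ.le_right p hp),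
          hf.arcInterior_image (hQ.left_le q hq) (hQ.le_right q hq)]
        rw [disjoint_left]
        rintro _ ⟨x, hx, rfl⟩ ⟨y, hy, hxy⟩
        have hx' := hy
        rw [hf.2.1 (hsub q hq (Ioo_subset_Icc_self hy)) (hsub p hp (Ioo_subset_Icc_self hx)) hxy]
          at hx'
        rcases hQ.nonoverlapping p hp q hq (fun h => hne (by rw [h])) with h | h
        · linarith [hx.2, hx'.1]
        · linarith [hx.1, hx'.2]
      · refine eq_univ_of_forall fun x => ?_
        obtain ⟨y, hy, rfl⟩ := hf.2.2.symm.subset (mem_univ x)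
        obtain ⟨p, hp, hyp⟩ := hcover y hy
        exact ⟨f '' Icc p.1 p.2, by simpa using ⟨p.1, p.2, hp, rfl⟩, mem_image_of_mem f hyp⟩
    refine le_trans ?_ (le_iSup₂_of_le (f := fun (P : Finset (Set X)) (_ : IsArcPartition P) =>
      ∑ A ∈ P, Metric.ediam A ^ s) _ hpart le_rfl)
    rw [Finset.sum_image hinj]
    refine (Finset.sum_le_sum_of_subset hPQ).trans (Finset.sum_le_sum fun p hp => ?_)
    refine ENNReal.rpow_le_rpow (Metric.edist_le_ediam_of_mem ?_ ?_) hs.le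
    · exact mem_image_of_mem f (left_mem_Icc.2 (hQ.lt p hp).le)
    · exact mem_image_of_mem f (right_mem_Icc.2 (hQ.lt p hp).le)

theorem sVariation_eq_zero_of_subsingleton [Subsingleton X] [Nonempty X] (s : ℝ) :
    sVariation X s = 0 := by
  refine le_antisymm (iSup₂_le fun P hP => ?_) zero_le
  rw [Finset.eq_empty_of_forall_notMem (s := P), Finset.sum_empty]
  intro A hA
  obtain ⟨g, a, b, hg, -⟩ := hP.1 A hA
  exact zero_ne_one (hg.2.1 (left_mem_Icc.2 zero_le_one) (right_mem_Icc.2 zero_le_one)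
    (Subsingleton.elim (g (0 : ℝ)) (g 1)))

theorem IsArcParam.sVariation_image_Icc (hs : 0 < s) (hf : IsArcParam f) {t : ℝ}
    (ht : t ∈ Icc (0 : ℝ) 1) : sVariation (f '' Icc 0 t) s = chordVariation f s 0 t := by
  rcases ht.1.eq_or_lt with rfl | ht0
  · have : Subsingleton (f '' Icc 0 0) := by
      rw [Icc_self, image_singleton]
      infer_instance
    have : Nonempty (f '' Icc 0 0) := ⟨f 0, mem_image_of_mem f (left_mem_Icc.2 le_rfl)⟩
    rw [sVariation_eq_zero_of_subsingleton, chordVariation_self]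
  have hmaps : ∀ x ∈ Icc (0 : ℝ) 1, t * x ∈ Icc 0 t := fun x hx =>
    ⟨mul_nonneg ht.1 hx.1, mul_le_of_le_one_right ht.1 hx.2⟩
  have hsub : Icc 0 t ⊆ Icc (0 : ℝ) 1 := Icc_subset_Icc_right ht.2
  let g : ℝ → f '' Icc 0 t := fun x =>
    ⟨f (t * projIcc 0 1 zero_le_one x), mem_image_of_mem f (hmaps _ (projIcc 0 1 _ x).2)⟩
  have hgval : ∀ x ∈ Icc (0 : ℝ) 1, (g x : X) = f (t * x) := fun x hx => by
    simp only [g, projIcc_of_mem zero_le_one hx]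
  have hg : IsArcParam g := by
    refine ⟨?_, ?_, ?_⟩
    · refine continuousOn_iff_continuous_domRestrict.2 (Continuous.subtype_mk ?_ _)
      exact hf.1.comp_continuous (by fun_prop) fun x => hsub (hmaps _ (projIcc 0 1 _ _).2)
    · intro x hx y hy hxy
      have h1 : f (t * x) = f (t * y) := by rw [← hgval x hx, ← hgval y hy, hxy]
      exact mul_left_cancel₀ ht0.ne' (hf.2.1 (hsub (hmaps x hx)) (hsub (hmaps y hy)) h1)
    · refine eq_univ_of_forall ?_
      rintro ⟨_, y, hy, rfl⟩
      have hmem : y / t ∈ Icc (0 : ℝ) 1 := ⟨div_nonneg hy.1 ht.1, (div_le_one ht0).2 hy.2⟩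
      refine ⟨y / t, hmem, Subtype.ext ?_⟩
      rw [hgval _ hmem, mul_div_cancel₀ y ht0.ne']
  rw [sVariation_eq_chordVariation hs hg]
  have hdiv : MapsTo (fun x => x / t) (Icc 0 t) (Icc 0 1) := fun x hx =>
    ⟨div_nonneg hx.1 ht.1, (div_le_one ht0).2 hx.2⟩
  apply le_antisymm
  · refine chordVariation_comp_le hs (φ := fun x => t * x)
      (fun x _ y _ h => mul_le_mul_of_nonneg_left h ht.1) hmaps fun x hx y hy => ?_
    rw [Subtype.edist_eq, hgval x hx, hgval y hy]
  · refine chordVariation_comp_le hs (φ := fun x => x / t)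
      (fun x _ y _ h => div_le_div_of_nonneg_right h ht.1) hdiv fun x hx y hy => ?_
    rw [Subtype.edist_eq, hgval _ (hdiv hx), hgval _ (hdiv hy), mul_div_cancel₀ x ht0.ne',
      mul_div_cancel₀ y ht0.ne']

end Arc

end ArcVariation

/-- If `s ≥ 1`, `X` is a metric arc with `‖X‖_{s-var} < ∞` and `f` is a homeomorphism
from `[0,1]` onto `X`, then `t ↦ ‖f([0,t])‖_{s-var}` is continuous on `[0,1]`. -/
theorem continuousOn_sVariation_initial_subarc (X : Type*) [MetricSpace X] (s : ℝ)
    (hs : 1 ≤ s) (hfin : sVariation X s < ⊤) (f : ℝ → X) (hf : IsArcParam f) :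
    ContinuousOn (fun t => sVariation (f '' Set.Icc 0 t) s) (Set.Icc (0:ℝ) 1) := by
  have hs0 : 0 < s := by linarith
  have heq : Set.EqOn (Set.IccExtend zero_le_one ((Set.Icc (0 : ℝ) 1).domRestrict f)) f
      (Set.Icc 0 1) := fun x hx => Set.IccExtend_of_mem _ _ hx
  have hcont := (continuousOn_iff_continuous_domRestrict.1 hf.1).Icc_extend' (h := zero_le_one)
  have hF : ∀ t ∈ Set.Icc (0 : ℝ) 1, sVariation (f '' Set.Icc 0 t) s =
      chordVariation (Set.IccExtend zero_le_one ((Set.Icc (0 : ℝ) 1).domRestrict f)) s 0 t := by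
    intro t ht
    have hsub : Set.Icc 0 t ⊆ Set.Icc (0 : ℝ) 1 := Set.Icc_subset_Icc_right ht.2
    rw [hf.sVariation_image_Icc hs0 ht]
    apply le_antisymm <;>
    exact chordVariation_comp_le hs0 (φ := id) monotoneOn_id (Set.mapsTo_id _) fun x hx y hy => by
      rw [id, id, heq (hsub hx), heq (hsub hy)]
  have hone : sVariation X s = sVariation (f '' Set.Icc 0 1) s := by
    rw [sVariation_eq_chordVariation hs0 hf, hf.sVariation_image_Icc hs0 (by simp)]
  refine (continuousOn_chordVariation hs hcont ?_).congr hF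
  rw [← hF 1 (by simp), ← hone]
  exact hfin.ne
end
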